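/- arXiv:2204.14150 — 4 statements merged into one kernel-verified Lean document; each statement's English description precedes it below -/
import Mathlib

section
/- Let G be a bipartite cactus graph. Then Sz*(G) ≤ 2·W(G). -/
open Finset

attribute [local instance] Classical.propDecidable

variable {V : Type*}

/-- `n_G(s,t)`: the number of vertices strictly closer to `s` than to `t`. -/
noncomputable def closerCount [Fintype V] (G : SimpleGraph V) (s t : V) : ℕ :=
  (Finset.univ.filter fun w => G.dist w s < G.dist w t).card

/-- `o_G(s,t)`: the number of vertices equidistant from `s` and `t`. -/
noncomputable def equidistCount [Fintype V] (G : SimpleGraph V) (s t : V) : ℕ :=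
  (Finset.univ.filter fun w => G.dist w s = G.dist w t).card

lemma equidistCount_comm [Fintype V] (G : SimpleGraph V) (s t : V) :
    equidistCount G s t = equidistCount G t s := by
  unfold equidistCount
  congr 1
  ext w
  simp only [Finset.mem_filter]
  exact and_congr_right fun _ => ⟨Eq.symm, Eq.symm⟩

/-- `o_G` as a function on unordered pairs (edges). -/
noncomputable def equidistSym2 [Fintype V] (G : SimpleGraph V) : Sym2 V → ℕ :=
  Sym2.lift ⟨fun s t => equidistCount G s t, fun s t => equidistCount_comm G s t⟩

/-- The Wiener index: the sum of distances over unordered pairs of vertices. -/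
noncomputable def wiener [Fintype V] (G : SimpleGraph V) : ℕ :=
  ∑ p : Sym2 V, Sym2.lift ⟨fun u v => G.dist u v, fun _ _ => G.dist_comm⟩ p

/-- The Szeged index `Sz(G) = Σ_{{s,t} ∈ E(G)} n_G(s,t) n_G(t,s)`. -/
noncomputable def szeged [Fintype V] (G : SimpleGraph V) : ℕ :=
  ∑ e ∈ G.edgeFinset,
    Sym2.lift ⟨fun s t => closerCount G s t * closerCount G t s,
      fun _ _ => Nat.mul_comm _ _⟩ e

/-- The revised Szeged index
`Sz*(G) = Σ_{{s,t} ∈ E(G)} (n_G(s,t) + o_G(s,t)/2) (n_G(t,s) + o_G(t,s)/2)`. -/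
noncomputable def revisedSzeged [Fintype V] (G : SimpleGraph V) : ℚ :=
  ∑ e ∈ G.edgeFinset,
    Sym2.lift ⟨fun s t =>
      ((closerCount G s t : ℚ) + (equidistCount G s t : ℚ) / 2) *
        ((closerCount G t s : ℚ) + (equidistCount G t s : ℚ) / 2),
      fun _ _ => mul_comm _ _⟩ e

/-- An edge `{s,t}` is `(u,v)`-distance-disparate if `d(u,s) < d(u,t)` and `d(v,s) > d(v,t)`,
or `d(u,s) > d(u,t)` and `d(v,s) < d(v,t)`. -/
def IsDisparate (G : SimpleGraph V) (u v : V) : Sym2 V → Prop :=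
  Sym2.lift ⟨fun s t =>
    (G.dist u s < G.dist u t ∧ G.dist v t < G.dist v s) ∨
      (G.dist u t < G.dist u s ∧ G.dist v s < G.dist v t),
    fun _ _ => propext or_comm⟩

/-- `dis_G(u,v)`: the number of `(u,v)`-distance-disparate edges of `G`. -/
noncomputable def disCount [Fintype V] (G : SimpleGraph V) (u v : V) : ℕ :=
  (G.edgeFinset.filter (IsDisparate G u v)).card

/-- An edge `{s,t}` is `(u,v)`-distance-equal if `d(u,s) = d(u,t)` and `d(v,s) = d(v,t)`. -/
def IsDistEqual (G : SimpleGraph V) (u v : V) : Sym2 V → Prop :=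
  Sym2.lift ⟨fun s t => G.dist u s = G.dist u t ∧ G.dist v s = G.dist v t,
    fun _ _ => propext ⟨fun h => ⟨h.1.symm, h.2.symm⟩, fun h => ⟨h.1.symm, h.2.symm⟩⟩⟩

/-- `deq_G(u,v)`: the number of `(u,v)`-distance-equal edges of `G`. -/
noncomputable def deqCount [Fintype V] (G : SimpleGraph V) (u v : V) : ℕ :=
  (G.edgeFinset.filter (IsDistEqual G u v)).card

/-- A subgraph without cut vertices: it is connected and deleting any single vertex leaves
it preconnected. -/
def NoCutVertexSub (G : SimpleGraph V) (H : G.Subgraph) : Prop :=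
  H.Connected ∧ ∀ v : V, ((H.deleteVerts {v}).coe.Preconnected)

/-- A block of `G`: a maximal connected subgraph without a cut vertex. -/
def IsBlock (G : SimpleGraph V) (B : G.Subgraph) : Prop :=
  NoCutVertexSub G B ∧ ∀ H : G.Subgraph, NoCutVertexSub G H → B ≤ H → B = H

/-- The subgraph `B` is a single edge together with its two endpoints. -/
def IsEdgeBlock (G : SimpleGraph V) (B : G.Subgraph) : Prop :=
  ∃ (u v : V) (h : G.Adj u v), B = G.subgraphOfAdj h

/-- The subgraph `B` is a cycle (of some length `n ≥ 3`). -/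
def IsCycleBlock (G : SimpleGraph V) (B : G.Subgraph) : Prop :=
  ∃ n : ℕ, 3 ≤ n ∧ Nonempty (B.coe ≃g SimpleGraph.cycleGraph n)

/-- A cactus graph: a connected graph in which every block is an edge or a cycle. -/
def IsCactus (G : SimpleGraph V) : Prop :=
  G.Connected ∧ ∀ B : G.Subgraph, IsBlock G B → IsEdgeBlock G B ∨ IsCycleBlock G B

namespace CactusProof

/-- Reachability of two vertices inside a subgraph. -/
def Rch (G : SimpleGraph V) (K : G.Subgraph) (u w : V) : Prop :=
  ∃ (hu : u ∈ K.verts) (hw : w ∈ K.verts), K.coe.Reachable ⟨u, hu⟩ ⟨w, hw⟩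

lemma Rch.symm {G : SimpleGraph V} {K : G.Subgraph} {u w : V} (h : Rch G K u w) :
    Rch G K w u := by
  obtain ⟨hu, hw, h⟩ := h
  exact ⟨hw, hu, h.symm⟩

lemma Rch.trans {G : SimpleGraph V} {K : G.Subgraph} {u v w : V} (h : Rch G K u v)
    (h' : Rch G K v w) : Rch G K u w := by
  obtain ⟨hu, hv, h⟩ := h
  obtain ⟨_, hw, h'⟩ := h'
  exact ⟨hu, hw, h.trans h'⟩

lemma Rch.of_adj {G : SimpleGraph V} {K : G.Subgraph} {u w : V} (h : K.Adj u w) :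
    Rch G K u w :=
  ⟨h.fst_mem, h.snd_mem, SimpleGraph.Adj.reachable (by simpa using h)⟩

lemma Rch.refl {G : SimpleGraph V} {K : G.Subgraph} {u : V} (h : u ∈ K.verts) :
    Rch G K u u := ⟨h, h, SimpleGraph.Reachable.refl _⟩

lemma preconnected_of_base {G : SimpleGraph V} {K : G.Subgraph} (b : V)
    (h : ∀ w ∈ K.verts, Rch G K w b) : K.coe.Preconnected := by
  rintro ⟨u, hu⟩ ⟨w, hw⟩
  obtain ⟨_, _, h⟩ := (h u hu).trans (h w hw).symm
  exact h

lemma rch_chain {G : SimpleGraph V} {K : G.Subgraph} (f : ℕ → V) (m n : ℕ) (hmn : m ≤ n)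
    (hv : f m ∈ K.verts) (h : ∀ i, m ≤ i → i < n → K.Adj (f i) (f (i + 1))) :
    Rch G K (f m) (f n) := by
  induction n, hmn using Nat.le_induction with
  | base => exact Rch.refl hv
  | succ n hmn ih =>
    exact (ih fun i h1 h2 => h i h1 (by omega)).trans (Rch.of_adj (h n hmn (by omega)))

lemma preconnected_sup {G : SimpleGraph V} {H K : G.Subgraph} (b : V) (hb : b ∈ H.verts)
    (hb' : b ∈ K.verts) (hH : H.coe.Preconnected) (hK : K.coe.Preconnected) :
    (H ⊔ K).coe.Preconnected := by
  apply preconnected_of_base b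
  intro w hw
  rcases hw with hw | hw
  · exact ⟨Or.inl hw, Or.inl hb,
      (hH ⟨w, hw⟩ ⟨b, hb⟩).map (SimpleGraph.Subgraph.inclusion (le_sup_left : H ≤ H ⊔ K))⟩
  · exact ⟨Or.inr hw, Or.inr hb',
      (hK ⟨w, hw⟩ ⟨b, hb'⟩).map (SimpleGraph.Subgraph.inclusion (le_sup_right : K ≤ H ⊔ K))⟩

lemma deleteVerts_sup {G : SimpleGraph V} (H K : G.Subgraph) (s : Set V) :
    (H ⊔ K).deleteVerts s = H.deleteVerts s ⊔ K.deleteVerts s := by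
  ext u w
  · simp [or_and_right]
  · simp only [SimpleGraph.Subgraph.deleteVerts_adj, SimpleGraph.Subgraph.sup_adj,
      SimpleGraph.Subgraph.verts_sup, Set.mem_union]
    constructor
    · rintro ⟨_, h1, _, h2, h | h⟩
      · exact Or.inl ⟨h.fst_mem, h1, h.snd_mem, h2, h⟩
      · exact Or.inr ⟨h.fst_mem, h1, h.snd_mem, h2, h⟩
    · rintro (⟨a, b, c, d, e⟩ | ⟨a, b, c, d, e⟩)
      · exact ⟨Or.inl a, b, Or.inl c, d, Or.inl e⟩
      · exact ⟨Or.inr a, b, Or.inr c, d, Or.inr e⟩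

lemma noCut_sup {G : SimpleGraph V} {H K : G.Subgraph} (hH : NoCutVertexSub G H)
    (hK : NoCutVertexSub G K) (x y : V) (hxy : x ≠ y) (hx : x ∈ H.verts) (hx' : x ∈ K.verts)
    (hy : y ∈ H.verts) (hy' : y ∈ K.verts) : NoCutVertexSub G (H ⊔ K) := by
  refine ⟨?_, fun v => ?_⟩
  · have hp := preconnected_sup x hx hx' hH.1.preconnected.coe hK.1.preconnected.coe
    have : Nonempty (H ⊔ K).verts := ⟨⟨x, Or.inl hx⟩⟩
    exact ⟨⟨hp⟩⟩
  · rw [deleteVerts_sup]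
    by_cases h : x = v
    · refine preconnected_sup y ?_ ?_ (hH.2 v) (hK.2 v)
      · exact ⟨hy, by rintro rfl; exact hxy h⟩
      · exact ⟨hy', by rintro rfl; exact hxy h⟩
    · exact preconnected_sup x ⟨hx, h⟩ ⟨hx', h⟩ (hH.2 v) (hK.2 v)

/-- Two parallel geodesics joining the edges `xy` and `st`. -/
structure Ladder (G : SimpleGraph V) (x y s t : V) (a : ℕ) (p q : ℕ → V) : Prop where
  p0 : p 0 = x
  pa : p a = s
  q0 : q 0 = y
  qa : q a = t
  hxy : G.Adj x y
  hst : G.Adj s t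
  padj : ∀ i < a, G.Adj (p i) (p (i + 1))
  qadj : ∀ i < a, G.Adj (q i) (q (i + 1))
  xp : ∀ i ≤ a, G.dist x (p i) = i
  yp : ∀ i ≤ a, G.dist y (p i) = i + 1
  yq : ∀ i ≤ a, G.dist y (q i) = i
  xq : ∀ i ≤ a, G.dist x (q i) = i + 1

lemma Ladder.symm {G : SimpleGraph V} {x y s t : V} {a : ℕ} {p q : ℕ → V}
    (L : Ladder G x y s t a p q) : Ladder G y x t s a q p :=
  ⟨L.q0, L.qa, L.p0, L.pa, L.hxy.symm, L.hst.symm, L.qadj, L.padj, L.yq, L.xq, L.xp, L.yp⟩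

lemma Ladder.ne {G : SimpleGraph V} {x y s t : V} {a : ℕ} {p q : ℕ → V}
    (L : Ladder G x y s t a p q) {i j : ℕ} (hi : i ≤ a) (hj : j ≤ a) : p i ≠ q j := by
  intro h
  have h1 := L.xp i hi
  have h2 := L.yp i hi
  have h3 := L.yq j hj
  have h4 := L.xq j hj
  rw [h] at h1 h2
  omega

lemma Ladder.pinj {G : SimpleGraph V} {x y s t : V} {a : ℕ} {p q : ℕ → V}
    (L : Ladder G x y s t a p q) {i j : ℕ} (hi : i ≤ a) (hj : j ≤ a) (h : p i = p j) :
    i = j := by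
  have h1 := L.xp i hi
  have h2 := L.xp j hj
  rw [h] at h1
  omega

lemma geodesic {G : SimpleGraph V} (hG : G.Connected) (x s : V) :
    ∃ f : ℕ → V, f 0 = x ∧ f (G.dist x s) = s ∧
      (∀ i < G.dist x s, G.Adj (f i) (f (i + 1))) ∧
      ∀ i ≤ G.dist x s, G.dist x (f i) = i ∧ G.dist (f i) s + i = G.dist x s := by
  obtain ⟨w, hw⟩ := hG.exists_walk_length_eq_dist x s
  refine ⟨w.getVert, by simp, by rw [← hw]; simp, fun i hi => w.adj_getVert_succ (by omega), ?_⟩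
  intro i hi
  have h1 := SimpleGraph.dist_le (w.take i)
  have h2 := SimpleGraph.dist_le (w.drop i)
  have h3 := hG.dist_triangle (u := x) (v := w.getVert i) (w := s)
  simp only [SimpleGraph.Walk.take_length, SimpleGraph.Walk.drop_length] at h1 h2
  omega

lemma parity {G : SimpleGraph V} (hG : G.Connected) (hb : G.Colorable 2) {s t : V}
    (hst : G.Adj s t) (w : V) : G.dist w s ≠ G.dist w t := by
  obtain ⟨c⟩ := hb
  let c' : G.Coloring Bool := (SimpleGraph.recolorOfEquiv G finTwoEquiv) c
  intro h
  obtain ⟨p, hp⟩ := hG.exists_walk_length_eq_dist w s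
  obtain ⟨q, hq⟩ := hG.exists_walk_length_eq_dist w t
  have h1 := c'.even_length_iff_congr p
  have h2 := c'.even_length_iff_congr q
  have h3 := c'.valid hst
  rw [hp, h, ← hq] at h1
  rw [h1] at h2
  cases hs : c' s <;> cases ht : c' t <;> cases hw : c' w <;> simp_all

lemma exists_ladder {G : SimpleGraph V} (hG : G.Connected) (hb : G.Colorable 2)
    {x y s t : V} (hxy : G.Adj x y) (hst : G.Adj s t) (h1 : G.dist x s < G.dist x t)
    (h2 : G.dist y t < G.dist y s) :
    ∃ a p q, Ladder G x y s t a p q := by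
  have dxy : G.dist x y = 1 := SimpleGraph.dist_eq_one_iff_adj.2 hxy
  have dst : G.dist s t = 1 := SimpleGraph.dist_eq_one_iff_adj.2 hst
  have tri : ∀ u v w : V, G.dist u w ≤ G.dist u v + G.dist v w :=
    fun u v w => hG.dist_triangle
  have cm : ∀ u v : V, G.dist u v = G.dist v u := fun u v => SimpleGraph.dist_comm
  have e1 := parity hG hb hxy s
  have e2 := parity hG hb hxy t
  have i1 := tri x s t
  have i2 := tri y t s
  have i3 := tri x y s
  have i4 := tri y x s
  have i5 := tri x y t
  have i6 := tri y x t
  rw [cm t s] at i2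
  rw [cm y x] at i4 i6
  rw [cm s x, cm s y] at e1
  rw [cm t x, cm t y] at e2
  have k1 : G.dist y t = G.dist x s := by omega
  have k2 : G.dist x t = G.dist x s + 1 := by omega
  have k3 : G.dist y s = G.dist x s + 1 := by omega
  obtain ⟨p, p0, pa, padj, hp⟩ := geodesic hG x s
  obtain ⟨q, q0, qa, qadj, hq⟩ := geodesic hG y t
  rw [k1] at qa qadj hq
  refine ⟨G.dist x s, p, q, p0, pa, q0, qa, hxy, hst, padj, qadj, fun i hi => (hp i hi).1, ?_,
    fun i hi => (hq i hi).1, ?_⟩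
  · intro i hi
    have a1 := hp i hi
    have a2 := tri y x (p i)
    have a3 := tri y (p i) s
    rw [cm y x] at a2
    omega
  · intro i hi
    have a1 := hq i hi
    have a2 := tri x y (q i)
    have a3 := tri x (q i) t
    omega

lemma Ladder.core {G : SimpleGraph V} {x y s t : V} {a : ℕ} {p q : ℕ → V}
    (L : Ladder G x y s t a p q) (K : G.Subgraph) (k : ℕ)
    (h1 : ∀ w ∈ K.verts, ∃ i ≤ a, w = p i ∨ w = q i)
    (h2 : ∀ i ≤ a, p i ∈ K.verts) (h3 : ∀ i ≤ a, i ≠ k → q i ∈ K.verts)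
    (hadj : ∀ u ∈ K.verts, ∀ w ∈ K.verts, G.Adj u w → K.Adj u w) : K.coe.Preconnected := by
  have hp : ∀ i ≤ a, Rch G K x (p i) := by
    intro i hi
    rw [← L.p0]
    exact rch_chain p 0 i (by omega) (h2 0 (by omega)) fun j _ hj =>
      hadj _ (h2 j (by omega)) _ (h2 _ (by omega)) (L.padj j (by omega))
  apply preconnected_of_base x
  intro w hw
  obtain ⟨i, hi, rfl | rfl⟩ := h1 w hw
  · exact (hp i hi).symm
  · by_cases hik : i ≤ k
    · have hm : ∀ j ≤ i, q j ∈ K.verts := by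
        intro j hj
        by_cases hjk : j = k
        · have : j = i := by omega
          rw [this]; exact hw
        · exact h3 j (by omega) hjk
      have c := rch_chain (K := K) q 0 i (by omega) (hm 0 (by omega)) fun j _ hj =>
        hadj _ (hm j (by omega)) _ (hm _ (by omega)) (L.qadj j (by omega))
      refine c.symm.trans (Rch.of_adj (hadj _ (hm 0 (by omega)) _ ?_ ?_))
      · rw [← L.p0]; exact h2 0 (by omega)
      · rw [L.q0]; exact L.hxy.symm
    · have hm : ∀ j, i ≤ j → j ≤ a → q j ∈ K.verts := fun j h h' => h3 j h' (by omega)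
      have c := rch_chain (K := K) q i a hi hw fun j hj hj' =>
        hadj _ (hm j (by omega) (by omega)) _ (hm _ (by omega) (by omega)) (L.qadj j (by omega))
      refine (c.trans (Rch.of_adj (hadj _ (hm a hi le_rfl) _ (h2 a le_rfl) ?_))).trans
        (hp a le_rfl).symm
      rw [L.qa, L.pa]; exact L.hst.symm

/-- The subgraph induced by the vertices of the ladder. -/
def rails (G : SimpleGraph V) (a : ℕ) (p q : ℕ → V) : G.Subgraph :=
  (⊤ : G.Subgraph).induce {w | ∃ i ≤ a, w = p i ∨ w = q i}

lemma rails_symm (G : SimpleGraph V) (a : ℕ) (p q : ℕ → V) : rails G a p q = rails G a q p := by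
  unfold rails
  congr 1
  ext w
  simp only [Set.mem_ofPred_eq, or_comm]

lemma Ladder.del {G : SimpleGraph V} {x y s t : V} {a : ℕ} {p q : ℕ → V}
    (L : Ladder G x y s t a p q) (v : V) (hv : ∀ i ≤ a, p i ≠ v) :
    ((rails G a p q).deleteVerts {v}).coe.Preconnected := by
  obtain ⟨k, hk⟩ : ∃ k, ∀ i ≤ a, i ≠ k → q i ≠ v := by
    by_cases h : ∃ k ≤ a, q k = v
    · obtain ⟨k, hka, hk⟩ := h
      exact ⟨k, fun i hi hik h => hik (L.symm.pinj hi hka (h.trans hk.symm))⟩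
    · push Not at h
      exact ⟨0, fun i hi _ => h i hi⟩
  apply L.core _ k
  · rintro w ⟨hw, _⟩
    exact hw
  · intro i hi
    exact ⟨⟨i, hi, Or.inl rfl⟩, hv i hi⟩
  · intro i hi hik
    exact ⟨⟨i, hi, Or.inr rfl⟩, hk i hi hik⟩
  · rintro u ⟨hu, hu'⟩ w ⟨hw, hw'⟩ h
    rw [SimpleGraph.Subgraph.deleteVerts_adj]
    exact ⟨hu, hu', hw, hw', hu, hw, h⟩

lemma Ladder.noCut {G : SimpleGraph V} {x y s t : V} {a : ℕ} {p q : ℕ → V}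
    (L : Ladder G x y s t a p q) : NoCutVertexSub G (rails G a p q) := by
  refine ⟨?_, fun v => ?_⟩
  · have hp : (rails G a p q).coe.Preconnected := by
      apply L.core _ 0
      · intro w hw
        exact hw
      · exact fun i hi => ⟨i, hi, Or.inl rfl⟩
      · exact fun i hi _ => ⟨i, hi, Or.inr rfl⟩
      · intro u hu w hw h
        exact ⟨hu, hw, h⟩
    have : Nonempty (rails G a p q).verts := ⟨⟨p 0, ⟨0, by omega, Or.inl rfl⟩⟩⟩
    exact ⟨⟨hp⟩⟩
  · by_cases h : ∃ k ≤ a, p k = v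
    · obtain ⟨k, hka, rfl⟩ := h
      rw [rails_symm]
      exact L.symm.del _ fun i hi h => L.ne hka hi h.symm
    · push Not at h
      exact L.del v h

lemma cycle_deg (n : ℕ) (w b c d : Fin n)
    (hb : (SimpleGraph.cycleGraph n).Adj w b) (hc : (SimpleGraph.cycleGraph n).Adj w c)
    (hd : (SimpleGraph.cycleGraph n).Adj w d) : b = c ∨ c = d ∨ b = d := by
  match n with
  | 0 => exact w.elim0
  | n + 1 =>
    rw [SimpleGraph.cycleGraph_eq_circulantGraph] at hb hc hd
    simp only [SimpleGraph.circulantGraph_adj, Set.mem_singleton_iff] at hb hc hd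
    have key : ∀ b c : Fin (n + 1), w - b = 1 → w - c = 1 → b = c := by
      intro b c h h'
      exact sub_right_injective (h.trans h'.symm)
    have key' : ∀ b c : Fin (n + 1), b - w = 1 → c - w = 1 → b = c := by
      intro b c h h'
      exact sub_left_injective (h.trans h'.symm)
    rcases hb with ⟨_, hb | hb⟩ <;> rcases hc with ⟨_, hc | hc⟩ <;>
      rcases hd with ⟨_, hd | hd⟩ <;> grind

lemma block_deg {G : SimpleGraph V} {B : G.Subgraph} (hB : IsEdgeBlock G B ∨ IsCycleBlock G B)
    {w b c d : V} (hb : B.Adj w b) (hc : B.Adj w c) (hd : B.Adj w d) :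
    b = c ∨ c = d ∨ b = d := by
  rcases hB with ⟨u, v, h, rfl⟩ | ⟨n, _, ⟨φ⟩⟩
  · simp only [SimpleGraph.subgraphOfAdj_adj, Sym2.eq, Sym2.rel_iff', Prod.mk.injEq,
      Prod.swap_prod_mk] at hb hc hd
    grind
  · have hb' : B.coe.Adj ⟨w, hb.fst_mem⟩ ⟨b, hb.snd_mem⟩ := hb
    have hc' : B.coe.Adj ⟨w, hb.fst_mem⟩ ⟨c, hc.snd_mem⟩ := hc
    have hd' : B.coe.Adj ⟨w, hb.fst_mem⟩ ⟨d, hd.snd_mem⟩ := hd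
    have := cycle_deg n _ _ _ _ (φ.map_adj_iff.2 hb') (φ.map_adj_iff.2 hc') (φ.map_adj_iff.2 hd')
    simpa using this

lemma Ladder.agree {G : SimpleGraph V} {x y s t s' t' : V} {a a' : ℕ} {p q p' q' : ℕ → V}
    (L : Ladder G x y s t a p q) (L' : Ladder G x y s' t' a' p' q') (haa : a ≤ a')
    (B : G.Subgraph) (hB : IsEdgeBlock G B ∨ IsCycleBlock G B)
    (hLB : rails G a p q ≤ B) (hLB' : rails G a' p' q' ≤ B) :
    ∀ i ≤ a, p i = p' i := by
  have bp : ∀ i < a, B.Adj (p i) (p (i + 1)) := fun i hi =>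
    hLB.2 ⟨⟨i, by omega, Or.inl rfl⟩, ⟨i + 1, by omega, Or.inl rfl⟩, L.padj i hi⟩
  have bp' : ∀ i < a', B.Adj (p' i) (p' (i + 1)) := fun i hi =>
    hLB'.2 ⟨⟨i, by omega, Or.inl rfl⟩, ⟨i + 1, by omega, Or.inl rfl⟩, L'.padj i hi⟩
  have bxy : B.Adj (p 0) (q 0) :=
    hLB.2 ⟨⟨0, by omega, Or.inl rfl⟩, ⟨0, by omega, Or.inr rfl⟩, by
      rw [L.p0, L.q0]; exact L.hxy⟩
  intro i
  induction i using Nat.strong_induction_on with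
  | _ i ih =>
    intro hi
    match i with
    | 0 => rw [L.p0, L'.p0]
    | 1 =>
      have e0 := ih 0 (by omega) (by omega)
      have h1 := bp 0 (by omega)
      have h2 := bp' 0 (by omega)
      rw [← e0] at h2
      rcases block_deg hB h1 h2 bxy with h | h | h
      · exact h
      · exact absurd (h.trans (L.q0.trans L'.q0.symm)) (L'.ne (by omega) (by omega))
      · exact absurd h (L.ne (by omega) (by omega))
    | j + 2 =>
      have e0 := ih j (by omega) (by omega)
      have e1 := ih (j + 1) (by omega) (by omega)
      have h1 := bp (j + 1) (by omega)
      have h2 := bp' (j + 1) (by omega)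
      have h3 := (bp j (by omega)).symm
      rw [← e1] at h2
      rcases block_deg hB h1 h2 h3 with h | h | h
      · exact h
      · rw [e0] at h
        have := L'.pinj (by omega) (by omega) h
        omega
      · have := L.pinj (by omega) (by omega) h
        omega

lemma Ladder.unique_aux {G : SimpleGraph V} {x y s t s' t' : V} {a a' : ℕ}
    {p q p' q' : ℕ → V}
    (L : Ladder G x y s t a p q) (L' : Ladder G x y s' t' a' p' q') (haa : a ≤ a') (ha : 0 < a)
    (B : G.Subgraph) (hB : IsEdgeBlock G B ∨ IsCycleBlock G B)
    (hLB : rails G a p q ≤ B) (hLB' : rails G a' p' q' ≤ B) :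
    s = s' ∧ t = t' := by
  have hp := L.agree L' haa B hB hLB hLB'
  have hq := L.symm.agree L'.symm haa B hB (by rwa [rails_symm]) (by rwa [rails_symm])
  have es := hp a le_rfl
  have et := hq a le_rfl
  rcases haa.eq_or_lt with h | h
  · subst h
    rw [L.pa, L'.pa] at es
    rw [L.qa, L'.qa] at et
    exact ⟨es, et⟩
  · exfalso
    have b1 : B.Adj (p a) (q a) :=
      hLB.2 ⟨⟨a, le_rfl, Or.inl rfl⟩, ⟨a, le_rfl, Or.inr rfl⟩, by rw [L.pa, L.qa]; exact L.hst⟩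
    rw [es, et] at b1
    have b2 : B.Adj (p' a) (p' (a + 1)) :=
      hLB'.2 ⟨⟨a, by omega, Or.inl rfl⟩, ⟨a + 1, by omega, Or.inl rfl⟩, L'.padj a h⟩
    obtain ⟨b, rfl⟩ : ∃ b, a = b + 1 := ⟨a - 1, by omega⟩
    have b3 : B.Adj (p' (b + 1)) (p' b) :=
      hLB'.2 ⟨⟨b + 1, by omega, Or.inl rfl⟩, ⟨b, by omega, Or.inl rfl⟩,
        (L'.padj b (by omega)).symm⟩
    rcases block_deg hB b1 b2 b3 with h' | h' | h'
    · exact L'.ne (by omega) (by omega) h'.symm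
    · have := L'.pinj (by omega) (by omega) h'
      omega
    · exact L'.ne (by omega) (by omega) h'.symm

lemma Ladder.unique [Fintype V] {G : SimpleGraph V} (hG : IsCactus G)
    {x y s t s' t' : V} {a a' : ℕ}
    {p q p' q' : ℕ → V}
    (L : Ladder G x y s t a p q) (L' : Ladder G x y s' t' a' p' q') (ha : 0 < a) (ha' : 0 < a') :
    s = s' ∧ t = t' := by
  have memx : ∀ {s t : V} {a : ℕ} {p q : ℕ → V}, Ladder G x y s t a p q →
      x ∈ (rails G a p q).verts ∧ y ∈ (rails G a p q).verts := fun L =>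
    ⟨⟨0, by omega, Or.inl L.p0.symm⟩, ⟨0, by omega, Or.inr L.q0.symm⟩⟩
  have hN := noCut_sup L.noCut L'.noCut x y L.hxy.ne (memx L).1 (memx L').1 (memx L).2 (memx L').2
  obtain ⟨B, hle, hmax⟩ :=
    (Set.toFinite {H : G.Subgraph | NoCutVertexSub G H}).exists_le_maximal hN
  have hB : IsBlock G B := ⟨hmax.1, fun H hH hBH => le_antisymm hBH (hmax.2 hH hBH)⟩
  have hB' := hG.2 B hB
  have l1 := le_sup_left.trans hle
  have l2 := le_sup_right.trans hle
  rcases le_total a a' with h | h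
  · exact L.unique_aux L' h ha B hB' l1 l2
  · have := L'.unique_aux L h ha' B hB' l2 l1
    exact ⟨this.1.symm, this.2.symm⟩

lemma disparate_repr {G : SimpleGraph V} (hG : G.Connected) (hb : G.Colorable 2)
    {x y : V} (hxy : G.Adj x y) {e : Sym2 V} (he : e ∈ G.edgeSet) (hd : IsDisparate G x y e)
    (hne : e ≠ s(x, y)) :
    ∃ s t a p q, e = s(s, t) ∧ 0 < a ∧ Ladder G x y s t a p q := by
  have key : ∀ s t, G.Adj s t → s(s, t) ≠ s(x, y) → G.dist x s < G.dist x t →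
      G.dist y t < G.dist y s → ∃ a p q, 0 < a ∧ Ladder G x y s t a p q := by
    intro s t hst hne h1 h2
    obtain ⟨a, p, q, L⟩ := exists_ladder hG hb hxy hst h1 h2
    refine ⟨a, p, q, Nat.pos_of_ne_zero ?_, L⟩
    rintro rfl
    exact hne (by rw [← L.pa, ← L.qa, L.p0, L.q0])
  induction e using Sym2.ind with
  | _ s t =>
    rcases hd with ⟨h1, h2⟩ | ⟨h1, h2⟩
    · obtain ⟨a, p, q, h⟩ := key s t he hne h1 h2
      exact ⟨s, t, a, p, q, rfl, h⟩
    · obtain ⟨a, p, q, h⟩ := key t s (SimpleGraph.Adj.symm he) (by rwa [Sym2.eq_swap]) h1 h2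
      exact ⟨t, s, a, p, q, Sym2.eq_swap, h⟩

lemma dis_adj [Fintype V] {G : SimpleGraph V} (hG : IsCactus G) (hb : G.Colorable 2)
    {x y : V} (hxy : G.Adj x y) : disCount G x y ≤ 2 := by
  unfold disCount
  have h1 : ((G.edgeFinset.filter (IsDisparate G x y)).erase s(x, y)).card ≤ 1 := by
    rw [Finset.card_le_one]
    intro e he e' he'
    simp only [Finset.mem_erase, Finset.mem_filter, SimpleGraph.mem_edgeFinset] at he he'
    obtain ⟨s, t, a, p, q, rfl, ha, L⟩ := disparate_repr hG.1 hb hxy he.2.1 he.2.2 he.1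
    obtain ⟨s', t', a', p', q', rfl, ha', L'⟩ := disparate_repr hG.1 hb hxy he'.2.1 he'.2.2 he'.1
    obtain ⟨rfl, rfl⟩ := L.unique hG L' ha ha'
    rfl
  have := Finset.pred_card_le_card_erase (s := G.edgeFinset.filter (IsDisparate G x y))
    (a := s(x, y))
  omega

lemma dis_triangle [Fintype V] {G : SimpleGraph V} (hG : G.Connected) (hb : G.Colorable 2)
    (u w v : V) : disCount G u v ≤ disCount G u w + disCount G w v := by
  unfold disCount
  refine (Finset.card_le_card ?_).trans (Finset.card_union_le _ _)
  intro e he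
  rw [Finset.mem_union, Finset.mem_filter, Finset.mem_filter]
  rw [Finset.mem_filter] at he
  obtain ⟨he, hd⟩ := he
  induction e using Sym2.ind with
  | _ s t =>
    have hst : G.Adj s t := SimpleGraph.mem_edgeFinset.1 he
    have hw := parity hG hb hst w
    simp only [IsDisparate, Sym2.lift_mk] at hd ⊢
    simp only [he, true_and]
    omega

lemma dis_walk [Fintype V] {G : SimpleGraph V} (hG : IsCactus G) (hb : G.Colorable 2)
    {u v : V} (w : G.Walk u v) : disCount G u v ≤ 2 * w.length := by
  induction w with
  | nil =>
    unfold disCount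
    rw [Finset.filter_false_of_mem]
    · simp
    · intro e he
      induction e using Sym2.ind with
      | _ s t =>
        simp only [IsDisparate, Sym2.lift_mk]
        omega
  | @cons u w v h p ih =>
    have h1 := dis_triangle hG.1 hb u w v
    have h2 := dis_adj hG hb h
    rw [SimpleGraph.Walk.length_cons]
    omega

lemma dis_le [Fintype V] {G : SimpleGraph V} (hG : IsCactus G) (hb : G.Colorable 2)
    (u v : V) : disCount G u v ≤ 2 * G.dist u v := by
  obtain ⟨w, hw⟩ := hG.1.exists_walk_length_eq_dist u v
  rw [← hw]
  exact dis_walk hG hb w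

lemma revised_eq [Fintype V] {G : SimpleGraph V} (hG : G.Connected) (hb : G.Colorable 2) :
    revisedSzeged G = (szeged G : ℚ) := by
  unfold revisedSzeged szeged
  rw [Nat.cast_sum]
  refine Finset.sum_congr rfl fun e he => ?_
  induction e using Sym2.ind with
  | _ s t =>
    have hst : G.Adj s t := SimpleGraph.mem_edgeFinset.1 he
    have h0 : equidistCount G s t = 0 := by
      unfold equidistCount
      rw [Finset.card_eq_zero, Finset.filter_eq_empty_iff]
      exact fun w _ => parity hG hb hst w
    have h1 : equidistCount G t s = 0 := by rw [equidistCount_comm, h0]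
    simp [h0, h1]

lemma two_szeged_le [Fintype V] (G : SimpleGraph V) :
    2 * szeged G ≤ ∑ z : V × V, disCount G z.1 z.2 := by
  unfold szeged disCount
  simp only [Finset.card_filter]
  rw [Finset.sum_comm, Finset.mul_sum]
  refine Finset.sum_le_sum fun e he => ?_
  rw [← Finset.card_filter]
  induction e using Sym2.ind with
  | _ s t =>
    simp only [Sym2.lift_mk]
    let A := Finset.univ.filter fun w => G.dist w s < G.dist w t
    let B := Finset.univ.filter fun w => G.dist w t < G.dist w s
    have hdis : Disjoint (A ×ˢ B) (B ×ˢ A) := by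
      rw [Finset.disjoint_left]
      rintro ⟨u, v⟩ h h'
      simp only [A, B, Finset.mem_product, Finset.mem_filter, Finset.mem_univ, true_and] at h h'
      omega
    have hc : (A ×ˢ B ∪ B ×ˢ A).card = 2 * (closerCount G s t * closerCount G t s) := by
      rw [Finset.card_union_of_disjoint hdis, Finset.card_product, Finset.card_product]
      simp only [closerCount, A, B]
      ring
    rw [← hc]
    apply Finset.card_le_card
    rintro ⟨u, v⟩ h
    simp only [A, B, Finset.mem_union, Finset.mem_product, Finset.mem_filter, Finset.mem_univ,
      true_and] at h
    rw [Finset.mem_filter]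
    exact ⟨Finset.mem_univ _, h⟩

lemma sum_dist_le [Fintype V] (G : SimpleGraph V) :
    ∑ z : V × V, G.dist z.1 z.2 ≤ 2 * wiener G := by
  unfold wiener
  rw [Finset.mul_sum, ← Finset.sum_fiberwise (s := (Finset.univ : Finset (V × V)))
    (g := fun z => s(z.1, z.2))]
  refine Finset.sum_le_sum fun e _ => ?_
  induction e using Sym2.ind with
  | _ s t =>
    simp only [Sym2.lift_mk]
    have hsub : (Finset.univ.filter fun z : V × V => s(z.1, z.2) = s(s, t)) ⊆
        {(s, t), (t, s)} := by
      rintro ⟨u, v⟩ h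
      simpa using h
    have hcard := (Finset.card_le_card hsub).trans Finset.card_le_two
    refine (Finset.sum_le_card_nsmul _ _ (G.dist s t) ?_).trans ?_
    · intro z hz
      have := hsub hz
      simp only [Finset.mem_insert, Finset.mem_singleton] at this
      rcases this with rfl | rfl
      · exact le_rfl
      · exact SimpleGraph.dist_comm.le
    · rw [smul_eq_mul]
      exact Nat.mul_le_mul_right _ hcard

end CactusProof

/-- **Theorem.** For a bipartite cactus graph `G`, `Sz*(G) ≤ 2·W(G)`. -/
theorem revisedSzeged_le_two_wiener [Fintype V] (G : SimpleGraph V) (hG : IsCactus G)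
    (hbip : G.Colorable 2) :
    revisedSzeged G ≤ 2 * (wiener G : ℚ) := by
  rw [CactusProof.revised_eq hG.1 hbip]
  have h1 := CactusProof.two_szeged_le G
  have h2 : ∑ z : V × V, disCount G z.1 z.2 ≤ ∑ z : V × V, 2 * G.dist z.1 z.2 :=
    Finset.sum_le_sum fun z _ => CactusProof.dis_le hG hbip z.1 z.2
  have h3 := CactusProof.sum_dist_le G
  rw [← Finset.mul_sum] at h2
  have h4 : szeged G ≤ 2 * wiener G := by omega
  exact_mod_cast h4
end

section
/- Let G be a finite simple connected graph in which every block is a cycle. Then 2·W(G) ≤ Sz*(G). -/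
open Finset

attribute [local instance] Classical.propDecidable

variable {V : Type*}

/-- Cyclic distance on `{0, …, n-1}`. -/
def cd (n i j : ℕ) : ℕ := min (max i j - min i j) (n - (max i j - min i j))

/-- Cyclic adjacency on `{0, …, n-1}`. -/
def nadj (n i j : ℕ) : Prop := j = i + 1 ∨ i = j + 1 ∨ (i = 0 ∧ j + 1 = n) ∨ (j = 0 ∧ i + 1 = n)

/-- A cycle `c 0, …, c (n-1)` in `G` together with a projection of the whole graph on it. -/
structure CycRet (G : SimpleGraph V) (n : ℕ) (c : ℕ → V) (π : V → ℕ) : Prop where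
  hn : 3 ≤ n
  lt : ∀ x, π x < n
  pc : ∀ i, i < n → π (c i) = i
  adj : ∀ i, i + 1 < n → G.Adj (c i) (c (i + 1))
  adj' : G.Adj (c (n - 1)) (c 0)
  edge : ∀ x y, G.Adj x y → π x = π y ∨ (x = c (π x) ∧ y = c (π y) ∧ nadj n (π x) (π y))

lemma cd_between (n p j k : ℕ) (hn : 3 ≤ n) (hp : p < n) (hj : j < n) (hk : k < n)
    (h : nadj n j k) (hd : cd n p k = cd n p j + 1) :
    (((cd n p 1 : ℤ) - cd n p 0) - ((cd n j 1 : ℤ) - cd n j 0)).natAbs +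
    (((cd n j 1 : ℤ) - cd n j 0) - ((cd n k 1 : ℤ) - cd n k 0)).natAbs ≤
    (((cd n p 1 : ℤ) - cd n p 0) - ((cd n k 1 : ℤ) - cd n k 0)).natAbs := by
  have key : ∀ x, x < n → ((x = 0 ∧ (cd n x 1 : ℤ) - cd n x 0 = 1) ∨ 
     (1 ≤ x ∧ 2 * x ≤ n ∧ (cd n x 1 : ℤ) - cd n x 0 = -1) ∨ 
     (1 ≤ x ∧ 2 * x = n + 1 ∧ (cd n x 1 : ℤ) - cd n x 0 = 0) ∨
     (1 ≤ x ∧ n + 2 ≤ 2 * x ∧ (cd n x 1 : ℤ) - cd n x 0 = 1)) := by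
    intro x hx
    unfold cd
    omega
  have h1 := key p hp
  have h2 := key j hj
  have h3 := key k hk
  generalize (cd n p 1 : ℤ) - cd n p 0 = A at *
  generalize (cd n j 1 : ℤ) - cd n j 0 = B at *
  generalize (cd n k 1 : ℤ) - cd n k 0 = C at *
  clear key
  unfold cd at hd
  unfold nadj at h
  rcases h with h | h | h | h <;> rcases h1 with h1 | h1 | h1 | h1 <;>
    rcases h2 with h2 | h2 | h2 | h2 <;> (try omega)

namespace CycRet

variable {G : SimpleGraph V} {n : ℕ} {c : ℕ → V} {π : V → ℕ}

lemma dist_step (hG : G.Connected) (h : CycRet G n c π) (k i : ℕ) (hi : i + k < n) :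
    G.dist (c i) (c (i + k)) ≤ k := by
  induction k with
  | zero => simp
  | succ k ih =>
    have h1 := ih (by omega)
    have h2 : G.dist (c (i + k)) (c (i + k + 1)) = 1 :=
      SimpleGraph.dist_eq_one_iff_adj.2 (h.adj _ (by omega))
    have h3 := hG.dist_triangle (u := c i) (v := c (i + k)) (w := c (i + k + 1))
    rw [← add_assoc]
    omega

lemma dist_le_cd' (hG : G.Connected) (h : CycRet G n c π) (i j : ℕ) (hij : i ≤ j) (hj : j < n) :
    G.dist (c i) (c j) ≤ cd n i j := by
  have h1 := h.dist_step hG (j - i) i (by omega)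
  have h2 := h.dist_step hG i 0 (by omega)
  have h3 := h.dist_step hG (n - 1 - j) j (by omega)
  rw [show i + (j - i) = j by omega] at h1
  rw [show j + (n - 1 - j) = n - 1 by omega] at h3
  rw [zero_add] at h2
  have h4 : G.dist (c (n - 1)) (c 0) = 1 := SimpleGraph.dist_eq_one_iff_adj.2 h.adj'
  have h5 := hG.dist_triangle (u := c j) (v := c (n - 1)) (w := c 0)
  have h6 := hG.dist_triangle (u := c j) (v := c 0) (w := c i)
  rw [G.dist_comm (u := c j) (v := c i)] at h6
  unfold cd
  omega

lemma dist_le_cd (hG : G.Connected) (h : CycRet G n c π) (i j : ℕ) (hi : i < n) (hj : j < n) :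
    G.dist (c i) (c j) ≤ cd n i j := by
  rcases le_total i j with hij | hij
  · exact h.dist_le_cd' hG i j hij hj
  · rw [G.dist_comm]
    have := h.dist_le_cd' hG j i hij hi
    unfold cd at *
    omega

lemma lip (hG : G.Connected) (f : V → ℕ) (hf : ∀ x y, G.Adj x y → f x ≤ f y + 1) (x y : V) :
    f x ≤ f y + G.dist x y := by
  obtain ⟨p, hp⟩ := hG.exists_walk_length_eq_dist x y
  rw [← hp]
  clear hp
  induction p with
  | nil => simp
  | cons hadj p ih =>
    have := hf _ _ hadj
    rw [SimpleGraph.Walk.length_cons]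
    omega

lemma dist_ne (hG : G.Connected) (h : CycRet G n c π) (x y : V) (hxy : π x ≠ π y) :
    G.dist x y = G.dist x (c (π x)) + cd n (π x) (π y) + G.dist (c (π y)) y := by
  apply le_antisymm
  · have h1 := hG.dist_triangle (u := x) (v := c (π x)) (w := y)
    have h2 := hG.dist_triangle (u := c (π x)) (v := c (π y)) (w := y)
    have h3 := h.dist_le_cd hG (π x) (π y) (h.lt x) (h.lt y)
    omega
  · have key := lip hG (fun z => if π z = π y then G.dist z y else
      G.dist z (c (π z)) + cd n (π z) (π y) + G.dist (c (π y)) y) ?_ x y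
    · simpa [hxy] using key
    · intro a b hab
      have hab1 : G.dist a b = 1 := SimpleGraph.dist_eq_one_iff_adj.2 hab
      rcases h.edge a b hab with he | ⟨ha, hb, hn⟩
      · have h1 := hG.dist_triangle (u := a) (v := b) (w := y)
        have h2 := hG.dist_triangle (u := a) (v := b) (w := c (π b))
        simp only [he]
        split_ifs <;> omega
      · have e1 : G.dist a (c (π a)) = 0 := by rw [← ha]; simp
        have e2 : G.dist b (c (π b)) = 0 := by rw [← hb]; simp
        simp only [e1, e2]
        have l1 := h.lt a
        have l2 := h.lt b
        have l3 := h.lt y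
        have l4 := h.hn
        split_ifs with i1 i2 i2
        · have : a = b := by rw [ha, hb, i1, i2]
          subst this
          omega
        · have : a = c (π y) := by rw [ha, i1]
          rw [this]; omega
        · have : b = c (π y) := by rw [hb, i2]
          rw [this]
          have : cd n (π a) (π y) ≤ 1 := by
            unfold cd nadj at *
            omega
          omega
        · have : cd n (π a) (π y) ≤ cd n (π b) (π y) + 1 := by
            clear e1 e2 ha hb hab1 hab
            unfold cd nadj at *
            omega
          omega

lemma dist_c (hG : G.Connected) (h : CycRet G n c π) (x : V) (j : ℕ) (hj : j < n) :
    G.dist x (c j) = G.dist x (c (π x)) + cd n (π x) j := by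
  by_cases hx : π x = j
  · subst hx
    simp [cd]
  · have := h.dist_ne hG x (c j) (by rw [h.pc j hj]; exact hx)
    rw [h.pc j hj] at this
    simpa using this

lemma dist_cc (hG : G.Connected) (h : CycRet G n c π) (i j : ℕ) (hi : i < n) (hj : j < n) :
    G.dist (c i) (c j) = cd n i j := by
  rw [h.dist_c hG _ j hj, h.pc i hi]
  simp

end CycRet

/-- The discrepancy of the edge `st` between `u` and `v`. -/
noncomputable def gap0 (G : SimpleGraph V) (u v s t : V) : ℕ :=
  (((G.dist u t : ℤ) - G.dist u s) - ((G.dist v t : ℤ) - G.dist v s)).natAbs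

lemma gap0_comm (G : SimpleGraph V) (u v s t : V) : gap0 G u v s t = gap0 G u v t s := by
  unfold gap0; omega

/-- The discrepancy as a function of the unordered edge. -/
noncomputable def gap (G : SimpleGraph V) (u v : V) : Sym2 V → ℕ :=
  Sym2.lift ⟨fun s t => gap0 G u v s t, fun s t => gap0_comm G u v s t⟩

@[simp] lemma gap_mk (G : SimpleGraph V) (u v s t : V) : gap G u v s(s, t) = gap0 G u v s t := rfl

lemma gap_between {G : SimpleGraph V} {n : ℕ} {c : ℕ → V} {π : V → ℕ} (hG : G.Connected)
    (h : CycRet G n c π) (u v w : V) (hvw : G.Adj v w) (hd : G.dist u w = G.dist u v + 1) :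
    gap0 G u v (c 0) (c 1) + gap0 G v w (c 0) (c 1) ≤ gap0 G u w (c 0) (c 1) := by
  have hn := h.hn
  unfold gap0
  rw [h.dist_c hG u 0 (by omega), h.dist_c hG v 0 (by omega), h.dist_c hG w 0 (by omega),
    h.dist_c hG u 1 (by omega), h.dist_c hG v 1 (by omega), h.dist_c hG w 1 (by omega)]
  rcases h.edge v w hvw with he | ⟨hv, hw, hadj⟩
  · rw [he]; push_cast; omega
  · have h1 := h.dist_c hG u (π v) (h.lt v)
    have h2 := h.dist_c hG u (π w) (h.lt w)
    rw [← hv] at h1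
    rw [← hw] at h2
    have := cd_between n (π u) (π v) (π w) hn (h.lt u) (h.lt v) (h.lt w) hadj (by omega)
    push_cast
    omega

lemma gap_edge {G : SimpleGraph V} {n : ℕ} {c : ℕ → V} {π : V → ℕ} [Fintype V] (hG : G.Connected)
    (h : CycRet G n c π) : 4 ≤ ∑ e ∈ G.edgeFinset, gap G (c 0) (c 1) e := by
  have hn := h.hn
  have inj : ∀ i j, i < n → j < n → c i = c j → i = j := by
    intro i j hi hj hij
    rw [← h.pc i hi, ← h.pc j hj, hij]
  have m01 : s(c 0, c 1) ∈ G.edgeFinset := by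
    simpa using h.adj 0 (by omega)
  have v01 : gap G (c 0) (c 1) s(c 0, c 1) = 2 := by
    rw [gap_mk]; unfold gap0
    rw [h.dist_cc hG _ _ (by omega) (by omega), h.dist_cc hG _ _ (by omega) (by omega),
      h.dist_cc hG _ _ (by omega) (by omega), h.dist_cc hG _ _ (by omega) (by omega)]
    unfold cd; omega
  rcases Nat.even_or_odd' n with ⟨k, hk | hk⟩
  · have hk1 : ∃ l, k + 1 = l ∧ l < n ∧ 2 ≤ k:= ⟨k + 1, rfl, by omega, by omega⟩
    obtain ⟨l, hl, hln, hk2⟩ := hk1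
    have m2 : s(c k, c l) ∈ G.edgeFinset := by
      subst hl
      simpa using h.adj k (by omega)
    have v2 : gap G (c 0) (c 1) s(c k, c l) = 2 := by
      rw [gap_mk]; unfold gap0
      rw [h.dist_cc hG _ _ (by omega) (by omega), h.dist_cc hG _ _ (by omega) (by omega),
        h.dist_cc hG _ _ (by omega) (by omega), h.dist_cc hG _ _ (by omega) (by omega)]
      unfold cd; omega
    have hne : s(c 0, c 1) ≠ s(c k, c l) := by
      intro he
      rcases Sym2.eq_iff.1 he with ⟨h1, h2⟩ | ⟨h1, h2⟩
      · have := inj _ _ (by omega) (by omega) h1; omega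
      · have := inj _ _ (by omega) (by omega) h1; omega
    calc 4 = ∑ e ∈ {s(c 0, c 1), s(c k, c l)}, gap G (c 0) (c 1) e := by
          rw [Finset.sum_pair hne, v01, v2]
      _ ≤ _ := by
          apply Finset.sum_le_sum_of_subset
          intro e he
          simp only [Finset.mem_insert, Finset.mem_singleton] at he
          rcases he with rfl | rfl <;> assumption
  · have hk1 : ∃ l m, k + 1 = l ∧ l < n ∧ 1 ≤ k ∧ G.Adj (c l) (c m) ∧ m < n ∧ 
        (m = l + 1 ∨ m = 0 ∧ k = 1) := by
      by_cases hk' : k = 1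
      · refine ⟨k + 1, 0, rfl, by omega, by omega, ?_, by omega, by omega⟩
        have := h.adj'
        rwa [show n - 1 = k + 1 by omega] at this
      · refine ⟨k + 1, k + 2, rfl, by omega, by omega, h.adj (k + 1) (by omega), by omega, by omega⟩
    obtain ⟨l, m, hl, hln, hk2, hlm, hm, hm'⟩ := hk1
    have m2 : s(c k, c l) ∈ G.edgeFinset := by
      subst hl
      simpa using h.adj k (by omega)
    have m3 : s(c l, c m) ∈ G.edgeFinset := by simpa using hlm
    have v2 : gap G (c 0) (c 1) s(c k, c l) = 1 := by
      rw [gap_mk]; unfold gap0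
      rw [h.dist_cc hG _ _ (by omega) (by omega), h.dist_cc hG _ _ (by omega) (by omega),
        h.dist_cc hG _ _ (by omega) (by omega), h.dist_cc hG _ _ (by omega) (by omega)]
      unfold cd; omega
    have v3 : gap G (c 0) (c 1) s(c l, c m) = 1 := by
      rw [gap_mk]; unfold gap0
      rw [h.dist_cc hG _ _ (by omega) (by omega), h.dist_cc hG _ _ (by omega) (by omega),
        h.dist_cc hG _ _ (by omega) (by omega), h.dist_cc hG _ _ (by omega) (by omega)]
      unfold cd; omega
    have hne : s(c 0, c 1) ≠ s(c k, c l) := by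
      intro he
      rcases Sym2.eq_iff.1 he with ⟨h1, h2⟩ | ⟨h1, h2⟩
      · have := inj _ _ (by omega) (by omega) h1; omega
      · have := inj _ _ (by omega) (by omega) h1; omega
    have hne2 : s(c 0, c 1) ≠ s(c l, c m) := by
      intro he
      rcases Sym2.eq_iff.1 he with ⟨h1, h2⟩ | ⟨h1, h2⟩
      · have := inj _ _ (by omega) (by omega) h1; omega
      · have := inj _ _ (by omega) (by omega) h2; omega
    have hne3 : s(c k, c l) ≠ s(c l, c m) := by
      intro he
      rcases Sym2.eq_iff.1 he with ⟨h1, h2⟩ | ⟨h1, h2⟩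
      · have := inj _ _ (by omega) (by omega) h1; omega
      · have := inj _ _ (by omega) (by omega) h1; omega
    calc 4 = ∑ e ∈ {s(c 0, c 1), s(c k, c l), s(c l, c m)}, gap G (c 0) (c 1) e := by
          rw [Finset.sum_insert (by simp only [Finset.mem_insert, Finset.mem_singleton]; tauto),
            Finset.sum_pair hne3, v01, v2, v3]
          norm_num
      _ ≤ _ := by
          apply Finset.sum_le_sum_of_subset
          intro e he
          simp only [Finset.mem_insert, Finset.mem_singleton] at he
          rcases he with rfl | rfl | rfl <;> assumption

lemma gap_swap (G : SimpleGraph V) (u v : V) (e : Sym2 V) : gap G u v e = gap G v u e := by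
  induction e with | _ s t => rw [gap_mk, gap_mk]; unfold gap0; omega

lemma four_dist_le [Fintype V] (G : SimpleGraph V) (hG : G.Connected)
    (H : ∀ s t, G.Adj s t → ∃ n c π, CycRet G n c π ∧ s(s, t) = s(c 0, c 1)) (u : V) :
    ∀ (k : ℕ) (v : V), G.dist u v = k → 4 * k ≤ ∑ e ∈ G.edgeFinset, gap G u v e := by
  intro k
  induction k with
  | zero => simp
  | succ k ih =>
    intro w hw
    obtain ⟨v, hvw, hv⟩ : ∃ v, G.Adj v w ∧ G.dist u v = k := by
      obtain ⟨p, hp⟩ := hG.exists_walk_length_eq_dist w u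
      rw [G.dist_comm, hw] at hp
      cases p with
      | nil => simp at hp
      | cons hadj p =>
        rename_i b
        refine ⟨b, hadj.symm, ?_⟩
        have h1 := SimpleGraph.dist_le p
        rw [SimpleGraph.Walk.length_cons] at hp
        have h2 := hG.dist_triangle (u := u) (v := b) (w := w)
        have h3 : G.dist b w = 1 := SimpleGraph.dist_eq_one_iff_adj.2 hadj.symm
        rw [G.dist_comm] at h1
        omega
    have h1 := ih v hv
    have h2 : 4 ≤ ∑ e ∈ G.edgeFinset, gap G v w e := by
      obtain ⟨n, c, π, hc, he⟩ := H v w hvw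
      have := gap_edge hG hc
      rcases Sym2.eq_iff.1 he with ⟨rfl, rfl⟩ | ⟨rfl, rfl⟩
      · exact this
      · simpa only [gap_swap G (c 1) (c 0)] using this
    have h3 : ∑ e ∈ G.edgeFinset, gap G u v e + ∑ e ∈ G.edgeFinset, gap G v w e ≤
        ∑ e ∈ G.edgeFinset, gap G u w e := by
      rw [← Finset.sum_add_distrib]
      apply Finset.sum_le_sum
      intro e he
      induction e with | _ s t =>
      obtain ⟨n, c, π, hc, he⟩ := H s t (by simpa using he)
      rw [he]
      exact gap_between hG hc u v w hvw (by omega)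
    omega

lemma two_wiener_le [Fintype V] (G : SimpleGraph V) :
    2 * wiener G ≤ ∑ u : V, ∑ v : V, G.dist u v := by
  rw [← Fintype.sum_prod_type' (f := fun u v => G.dist u v)]
  rw [← Finset.sum_fiberwise (s := Finset.univ) (g := fun p : V × V => s(p.1, p.2))]
  unfold wiener
  rw [Finset.mul_sum]
  apply Finset.sum_le_sum
  intro e _
  induction e with | _ s t =>
  by_cases hst : s = t
  · subst hst; simp
  · calc 2 * G.dist s t = ∑ p ∈ {(s, t), (t, s)}, G.dist p.1 p.2 := by
          rw [Finset.sum_pair (by simp; tauto)]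
          simp only [G.dist_comm (u := t) (v := s)]; ring
      _ ≤ _ := by
          apply Finset.sum_le_sum_of_subset
          intro p hp
          simp only [Finset.mem_insert, Finset.mem_singleton] at hp
          rcases hp with rfl | rfl <;> simp

lemma edge_term [Fintype V] (G : SimpleGraph V) (hG : G.Connected) (s t : V) (hst : G.Adj s t) :
    (∑ u : V, ∑ v : V, (gap0 G u v s t : ℚ)) ≤ 
    4 * (((closerCount G s t : ℚ) + (equidistCount G s t : ℚ) / 2) *
        ((closerCount G t s : ℚ) + (equidistCount G t s : ℚ) / 2)) := by
  have e1 : (closerCount G s t : ℚ) + (equidistCount G s t : ℚ) / 2 =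
      ∑ u : V, (1 + ((G.dist u t : ℚ) - G.dist u s)) / 2 := by
    unfold closerCount equidistCount
    rw [Finset.card_filter, Finset.card_filter]
    push_cast
    rw [Finset.sum_div, ← Finset.sum_add_distrib]
    apply Finset.sum_congr rfl
    intro u _
    have h1 := hG.dist_triangle (u := u) (v := s) (w := t)
    have h2 := hG.dist_triangle (u := u) (v := t) (w := s)
    have h3 : G.dist s t = 1 := SimpleGraph.dist_eq_one_iff_adj.2 hst
    have h4 : G.dist t s = 1 := SimpleGraph.dist_eq_one_iff_adj.2 hst.symm
    rcases lt_trichotomy (G.dist u s) (G.dist u t) with h | h | h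
    · have : G.dist u t = G.dist u s + 1 := by omega
      simp [this]
    · simp [h]
    · have : G.dist u s = G.dist u t + 1 := by omega
      simp [this]
  have e2 : (closerCount G t s : ℚ) + (equidistCount G t s : ℚ) / 2 =
      ∑ u : V, (1 - ((G.dist u t : ℚ) - G.dist u s)) / 2 := by
    unfold closerCount equidistCount
    rw [Finset.card_filter, Finset.card_filter]
    push_cast
    rw [Finset.sum_div, ← Finset.sum_add_distrib]
    apply Finset.sum_congr rfl
    intro u _
    have h1 := hG.dist_triangle (u := u) (v := s) (w := t)
    have h2 := hG.dist_triangle (u := u) (v := t) (w := s)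
    have h3 : G.dist s t = 1 := SimpleGraph.dist_eq_one_iff_adj.2 hst
    have h4 : G.dist t s = 1 := SimpleGraph.dist_eq_one_iff_adj.2 hst.symm
    rcases lt_trichotomy (G.dist u s) (G.dist u t) with h | h | h
    · have : G.dist u t = G.dist u s + 1 := by omega
      simp [this]
    · simp [h]
    · have : G.dist u s = G.dist u t + 1 := by omega
      simp [this]
  rw [e1, e2]
  set g : V → ℚ := fun u => (G.dist u t : ℚ) - G.dist u s with hg
  have e3 : 4 * ((∑ u : V, (1 + g u) / 2) * (∑ u : V, (1 - g u) / 2)) =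
      ∑ u : V, ∑ v : V, (1 - g u * g v) := by
    rw [← Finset.sum_div, ← Finset.sum_div]
    simp only [Finset.sum_add_distrib, Finset.sum_sub_distrib, ← Finset.mul_sum, ← Finset.sum_mul]
    simp
    ring
  have e4 := e3
  simp only [hg] at e4
  rw [e4]
  apply Finset.sum_le_sum
  intro u _
  apply Finset.sum_le_sum
  intro v _
  have key : ∀ u, ((G.dist u t : ℤ) - G.dist u s = 1) ∨ ((G.dist u t : ℤ) - G.dist u s = 0) ∨
      ((G.dist u t : ℤ) - G.dist u s = -1) := by
    intro u
    have h1 := hG.dist_triangle (u := u) (v := s) (w := t)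
    have h2 := hG.dist_triangle (u := u) (v := t) (w := s)
    have h3 : G.dist s t = 1 := SimpleGraph.dist_eq_one_iff_adj.2 hst
    have h4 : G.dist t s = 1 := SimpleGraph.dist_eq_one_iff_adj.2 hst.symm
    omega
  have : (gap0 G u v s t : ℤ) ≤ 
     1 - ((G.dist u t : ℤ) - G.dist u s) * ((G.dist v t : ℤ) - G.dist v s) := by
    unfold gap0
    rcases key u with h | h | h <;> rcases key v with h' | h' | h' <;> rw [h, h'] <;> decide
  exact_mod_cast this

lemma main_of_ret [Fintype V] (G : SimpleGraph V) (hG : G.Connected)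
    (H : ∀ s t, G.Adj s t → ∃ n c π, CycRet G n c π ∧ s(s, t) = s(c 0, c 1)) :
    2 * (wiener G : ℚ) ≤ revisedSzeged G := by
  have h1 : (2 * wiener G : ℚ) ≤ ∑ u : V, ∑ v : V, (G.dist u v : ℚ) := by
    exact_mod_cast two_wiener_le G
  have h2 : ∑ u : V, ∑ v : V, (4 * (G.dist u v : ℚ)) ≤
      ∑ u : V, ∑ v : V, ∑ e ∈ G.edgeFinset, (gap G u v e : ℚ) := by
    apply Finset.sum_le_sum
    intro u _
    apply Finset.sum_le_sum
    intro v _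
    exact_mod_cast four_dist_le G hG H u _ v rfl
  have h3 : ∑ u : V, ∑ v : V, ∑ e ∈ G.edgeFinset, (gap G u v e : ℚ) =
      ∑ e ∈ G.edgeFinset, ∑ u : V, ∑ v : V, (gap G u v e : ℚ) := by
    rw [Finset.sum_comm]
    simp_rw [Finset.sum_comm (s := Finset.univ) (t := G.edgeFinset)]
    apply Finset.sum_congr rfl
    intro e _
    rw [Finset.sum_comm]
  have h4 : ∑ e ∈ G.edgeFinset, ∑ u : V, ∑ v : V, (gap G u v e : ℚ) ≤ 4 * revisedSzeged G := by
    unfold revisedSzeged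
    rw [Finset.mul_sum]
    apply Finset.sum_le_sum
    intro e he
    induction e with | _ s t =>
    exact edge_term G hG s t (by simpa using he)
  simp only [← Finset.mul_sum] at h2
  linarith

lemma reach_of_walk {G : SimpleGraph V} {H : G.Subgraph} {u w : V} (p : G.Walk u w)
    (hH : p.toSubgraph ≤ H) (hu : u ∈ H.verts) (hw : w ∈ H.verts) :
    H.coe.Reachable ⟨u, hu⟩ ⟨w, hw⟩ := by
  have h := p.toSubgraph_connected.preconnected.coe ⟨u, p.start_mem_verts_toSubgraph⟩
    ⟨w, p.end_mem_verts_toSubgraph⟩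
  exact h.map (SimpleGraph.Subgraph.inclusion hH)

lemma toSubgraph_le_deleteVerts {G : SimpleGraph V} {H : G.Subgraph} {u w v : V} (p : G.Walk u w)
    (hH : p.toSubgraph ≤ H) (hv : v ∉ p.support) : p.toSubgraph ≤ H.deleteVerts {v} := by
  constructor
  · intro x hx
    refine ⟨hH.1 hx, ?_⟩
    rintro rfl
    exact hv (p.mem_verts_toSubgraph.1 hx)
  · intro x y hxy
    rw [SimpleGraph.Subgraph.deleteVerts_adj]
    refine ⟨hH.1 hxy.fst_mem, ?_, hH.1 hxy.snd_mem, ?_, hH.2 hxy⟩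
    · rintro rfl
      exact hv (p.mem_verts_toSubgraph.1 hxy.fst_mem)
    · rintro rfl
      exact hv (p.mem_verts_toSubgraph.1 hxy.snd_mem)

lemma noCut_edge {G : SimpleGraph V} {s t : V} (h : G.Adj s t) :
    NoCutVertexSub G (G.subgraphOfAdj h) := by
  refine ⟨SimpleGraph.Subgraph.subgraphOfAdj_connected h, ?_⟩
  rintro v ⟨x, hx⟩ ⟨y, hy⟩
  by_cases hxy : x = y
  · subst hxy; rfl
  · apply SimpleGraph.Adj.reachable
    rw [SimpleGraph.Subgraph.coe_adj, SimpleGraph.Subgraph.deleteVerts_adj]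
    refine ⟨hx.1, hx.2, hy.1, hy.2, ?_⟩
    have h1 : x = s ∨ x = t := by simpa using hx.1
    have h2 : y = s ∨ y = t := by simpa using hy.1
    rcases h1 with rfl | rfl <;> rcases h2 with rfl | rfl <;> simp_all

lemma noCut_sup {G : SimpleGraph V} {B : G.Subgraph} (hB : NoCutVertexSub G B) {a b : V}
    (p : G.Walk a b) (hp : p.IsPath) (hab : a ≠ b) (ha : a ∈ B.verts) (hb : b ∈ B.verts) :
    NoCutVertexSub G (B ⊔ p.toSubgraph) := by
  refine ⟨SimpleGraph.Subgraph.connected_sup hB.1.preconnected p.toSubgraph_connected.preconnected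
    ⟨a, ha, p.start_mem_verts_toSubgraph⟩, ?_⟩
  intro v
  have hle : B.deleteVerts {v} ≤ (B ⊔ p.toSubgraph).deleteVerts {v} :=
    SimpleGraph.Subgraph.deleteVerts_mono le_sup_left
  have key : ∀ y : ((B ⊔ p.toSubgraph).deleteVerts {v}).verts,
      ∃ z : (B.deleteVerts {v}).verts,
      ((B ⊔ p.toSubgraph).deleteVerts {v}).coe.Reachable y ⟨z.1, hle.1 z.2⟩ := by
    rintro ⟨y, hy⟩
    rcases hy.1 with hyB | hyp
    · exact ⟨⟨y, hyB, hy.2⟩, SimpleGraph.Reachable.refl _⟩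
    · have hys : y ∈ p.support := p.mem_verts_toSubgraph.1 hyp
      have hyv : y ≠ v := hy.2
      have hspec := p.take_spec hys
      have hsub : (p.takeUntil y hys).toSubgraph ≤ p.toSubgraph ∧
          (p.dropUntil y hys).toSubgraph ≤ p.toSubgraph := by
        have := SimpleGraph.Walk.toSubgraph_append (p.takeUntil y hys) (p.dropUntil y hys)
        rw [hspec] at this
        rw [this]
        exact ⟨le_sup_left, le_sup_right⟩
      by_cases h1 : v ∈ (p.takeUntil y hys).support
      · have h2 : v ∉ (p.dropUntil y hys).support := by
          intro h2
          have hnd := hp.support_nodup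
          rw [← hspec, SimpleGraph.Walk.support_append, List.nodup_append] at hnd
          rw [← SimpleGraph.Walk.cons_tail_support] at h2
          rcases List.mem_cons.1 h2 with h3 | h3
          · exact hyv h3.symm
          · exact hnd.2.2 _ h1 _ h3 rfl
        have hbv : b ≠ v := by
          rintro rfl
          exact h2 (SimpleGraph.Walk.end_mem_support _)
        exact ⟨⟨b, hb, hbv⟩, reach_of_walk (p.dropUntil y hys)
          (toSubgraph_le_deleteVerts _ (hsub.2.trans le_sup_right) h2) _ _⟩
      · have hav : a ≠ v := by
          rintro rfl
          exact h1 (SimpleGraph.Walk.start_mem_support _)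
        exact ⟨⟨a, ha, hav⟩, (reach_of_walk (p.takeUntil y hys)
          (toSubgraph_le_deleteVerts _ (hsub.1.trans le_sup_right) h1) _ _).symm⟩
  intro x y
  obtain ⟨z, hz⟩ := key x
  obtain ⟨w, hw⟩ := key y
  exact hz.trans (((hB.2 v z w).map (SimpleGraph.Subgraph.inclusion hle)).trans hw.symm)

lemma block_sep {G : SimpleGraph V} {B : G.Subgraph} (hB : IsBlock G B) {a b : V}
    (ha : a ∈ B.verts) (hb : b ∈ B.verts) (h : (G \ B.spanningCoe).Reachable a b) : a = b := by
  by_contra hab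
  obtain ⟨q, hq⟩ := h.exists_isPath
  have hle : G \ B.spanningCoe ≤ G := sdiff_le
  have hp : (q.mapLe hle).IsPath := hq.mapLe hle
  have heq := hB.2 _ (noCut_sup hB.1 (q.mapLe hle) hp hab ha hb) le_sup_left
  have hsub : (q.mapLe hle).toSubgraph ≤ B := by
    exact le_sup_right.trans heq.symm.le
  cases q with
  | nil => exact hab rfl
  | cons hadj q =>
    apply hadj.2
    apply hsub.2
    simp [SimpleGraph.Walk.mapLe]

lemma block_proj {G : SimpleGraph V} (hG : G.Connected) {B : G.Subgraph} {a : V}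
    (ha : a ∈ B.verts) (x : V) : ∃ z ∈ B.verts, (G \ B.spanningCoe).Reachable x z := by
  obtain ⟨p⟩ := hG x a
  induction p with
  | nil => exact ⟨_, ha, SimpleGraph.Reachable.refl _⟩
  | @cons x y _ hadj p ih =>
    obtain ⟨z, hz, hyz⟩ := ih ha
    by_cases hx : x ∈ B.verts
    · exact ⟨x, hx, SimpleGraph.Reachable.refl _⟩
    · refine ⟨z, hz, SimpleGraph.Reachable.trans (SimpleGraph.Adj.reachable ?_) hyz⟩
      exact ⟨hadj, fun h => hx (B.edge_vert h)⟩

lemma exists_block [Fintype V] {G : SimpleGraph V} {s t : V} (h : G.Adj s t) :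
    ∃ B : G.Subgraph, IsBlock G B ∧ B.Adj s t := by
  obtain ⟨B, hle, hB⟩ := (Set.toFinite {H : G.Subgraph | NoCutVertexSub G H}).exists_le_maximal
    (a := G.subgraphOfAdj h) (noCut_edge h)
  refine ⟨B, ⟨hB.prop, fun H hH hBH => le_antisymm hBH (hB.le_of_ge hH hBH)⟩, hle.2 ?_⟩
  simp

lemma fin_nadj {m : ℕ} (U W : Fin (m + 3)) (h : W - U = 1) :
    nadj (m + 3) U.val W.val ∧ nadj (m + 3) W.val U.val := by
  have : W = U + 1 := by rw [← h]; abel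
  subst this
  rw [Fin.val_add_one]
  unfold nadj
  have := U.2
  split_ifs with h1
  · subst h1
    simp
  · omega

open Fin.CommRing in
lemma exists_ret_aux {G : SimpleGraph V} (hG : G.Connected) {B : G.Subgraph} (hB : IsBlock G B)
    {m : ℕ} (ψ : B.coe ≃g SimpleGraph.cycleGraph (m + 3)) (s t : B.verts) (hst : ψ t - ψ s = 1) :
    ∃ n c π, CycRet G n c π ∧ s(s.1, t.1) = s(c 0, c 1) := by
  choose π0 hπ0 hr using block_proj hG s.2
  have hfix : ∀ x, x ∈ B.verts → π0 x = x := fun x hx => (block_sep hB hx (hπ0 x) (hr x)).symm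
  let c : ℕ → V := fun i => (ψ.symm ((i : Fin (m + 3)) + ψ s)).1
  let π : V → ℕ := fun x => (ψ ⟨π0 x, hπ0 x⟩ - ψ s).val
  have hadj : ∀ U W : Fin (m + 3), W - U = 1 → G.Adj (ψ.symm U).1 (ψ.symm W).1 := by
    intro U W h
    have : (SimpleGraph.cycleGraph (m + 3)).Adj U W := by
      rw [SimpleGraph.cycleGraph_adj]; exact Or.inr h
    exact B.adj_sub (ψ.symm.map_adj_iff.2 this)
  have hcπ : ∀ x, x ∈ B.verts → x = c (π x) := by
    intro x hx
    simp only [c, π, Fin.cast_val_eq_self, sub_add_cancel]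
    simp [hfix x hx]
  refine ⟨m + 3, c, π, ⟨by omega, fun x => Fin.is_lt _, ?_, ?_, ?_, ?_⟩, ?_⟩
  · intro i hi
    have h1 : (⟨π0 (c i), hπ0 (c i)⟩ : B.verts) = ψ.symm ((i : Fin (m + 3)) + ψ s) :=
      Subtype.ext (hfix _ (Subtype.coe_prop _))
    simp only [π, h1]
    simp [Nat.mod_eq_of_lt hi]
  · intro i hi
    apply hadj
    push_cast
    abel
  · apply hadj
    have : ((m + 3 - 1 : ℕ) : Fin (m + 3)) = -1 := by
      rw [eq_neg_iff_add_eq_zero]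
      have : ((m + 3 : ℕ) : Fin (m + 3)) = 0 := by simp
      rw [← this]
      norm_cast
    rw [this]
    simp
  · intro x y hxy
    by_cases hBxy : B.Adj x y
    · right
      have hx := B.edge_vert hBxy
      have hy := B.edge_vert hBxy.symm
      refine ⟨hcπ x hx, hcπ y hy, ?_⟩
      have h1 : (SimpleGraph.cycleGraph (m + 3)).Adj (ψ ⟨x, hx⟩) (ψ ⟨y, hy⟩) :=
        ψ.map_adj_iff.2 hBxy
      rw [SimpleGraph.cycleGraph_adj] at h1
      simp only [π, hfix x hx, hfix y hy]
      rcases h1 with h1 | h1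
      · exact (fin_nadj _ _ (by rw [← h1]; abel)).2
      · exact (fin_nadj _ _ (by rw [← h1]; abel)).1
    · left
      have hadj' : (G \ B.spanningCoe).Adj x y := ⟨hxy, hBxy⟩
      have : π0 x = π0 y := block_sep hB (hπ0 x) (hπ0 y)
        ((hr x).symm.trans (hadj'.reachable.trans (hr y)))
      simp only [π, this]
  · have h0 : c 0 = s.1 := by simp [c]
    have h1 : c 1 = t.1 := by
      have : (1 : Fin (m + 3)) + ψ s = ψ t := by rw [← hst]; abel
      simp [c, this]
    rw [h0, h1]

/-- **Theorem.** If every block of a finite simple connected graph `G` is a cycle, then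
`2·W(G) ≤ Sz*(G)`. -/
theorem two_wiener_le_revisedSzeged [Fintype V] (G : SimpleGraph V) (hG : G.Connected)
    (hblocks : ∀ B : G.Subgraph, IsBlock G B → IsCycleBlock G B) :
    2 * (wiener G : ℚ) ≤ revisedSzeged G := by
  apply main_of_ret G hG
  intro s t hst
  obtain ⟨B, hB, hBst⟩ := exists_block hst
  obtain ⟨n, hn, ⟨ψ⟩⟩ := hblocks B hB
  obtain ⟨m, rfl⟩ : ∃ m, n = m + 3 := ⟨n - 3, by omega⟩
  have hs := B.edge_vert hBst
  have ht := B.edge_vert hBst.symm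
  have h1 : (SimpleGraph.cycleGraph (m + 3)).Adj (ψ ⟨s, hs⟩) (ψ ⟨t, ht⟩) :=
    ψ.map_adj_iff.2 hBst
  rw [SimpleGraph.cycleGraph_adj] at h1
  rcases h1 with h1 | h1
  · have := exists_ret_aux hG hB ψ ⟨t, ht⟩ ⟨s, hs⟩ h1
    rwa [Sym2.eq_swap] at this
  · exact exists_ret_aux hG hB ψ ⟨s, hs⟩ ⟨t, ht⟩ h1
end

section
/- Let G be a finite simple connected graph in which every block is a cycle. Then 2·W(G) = Sz*(G) if and only if every cycle of G has even length. -/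
open Finset

attribute [local instance] Classical.propDecidable

variable {V : Type*}

namespace CactusAux

open SimpleGraph

lemma le_deleteVerts {G : SimpleGraph V} {K H : G.Subgraph} (h : K ≤ H) {w : V}
    (hw : w ∉ K.verts) : K ≤ H.deleteVerts {w} := by
  constructor
  · intro a ha
    exact ⟨h.1 ha, fun e => hw (by simpa [← Set.mem_singleton_iff.1 e] using ha)⟩
  · intro a b hab
    rw [Subgraph.deleteVerts_adj]
    have ha := K.edge_vert hab
    have hb := K.edge_vert hab.symm
    refine ⟨h.1 ha, ?_, h.1 hb, ?_, h.2 hab⟩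
    · rintro rfl; exact hw ha
    · rintro rfl; exact hw hb

lemma noCut_sup {G : SimpleGraph V} {B H : G.Subgraph} (hB : NoCutVertexSub G B)
    (hc : (B ⊔ H).Connected)
    (hx : ∀ w, ∀ h ∈ H.verts, h ≠ w → ∃ b ∈ B.verts, b ≠ w ∧
      ∃ p : G.Walk h b, p.toSubgraph ≤ H.deleteVerts {w}) : NoCutVertexSub G (B ⊔ H) := by
  refine ⟨hc, fun w => ?_⟩
  have hBle : B.deleteVerts {w} ≤ (B ⊔ H).deleteVerts {w} := Subgraph.deleteVerts_mono le_sup_left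
  have hHle : H.deleteVerts {w} ≤ (B ⊔ H).deleteVerts {w} := Subgraph.deleteVerts_mono le_sup_right
  have key : ∀ a ∈ ((B ⊔ H).deleteVerts {w}).verts, ∃ b ∈ B.verts, b ≠ w ∧
      ∃ p : G.Walk a b, p.toSubgraph ≤ (B ⊔ H).deleteVerts {w} := by
    rintro a ⟨ha, haw⟩
    have haw' : a ≠ w := haw
    rcases ha with ha | ha
    · refine ⟨a, ha, haw', Walk.nil, ?_⟩
      simp only [Walk.toSubgraph]
      rw [singletonSubgraph_le_iff]
      exact ⟨Or.inl ha, haw⟩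
    · obtain ⟨b, hb, hbw, p, hp⟩ := hx w a ha haw'
      exact ⟨b, hb, hbw, p, hp.trans hHle⟩
  have := (Subgraph.preconnected_iff_forall_exists_walk_subgraph ((B ⊔ H).deleteVerts {w})).2 ?_
  · exact this.coe
  intro a c ha hc
  obtain ⟨b, hb, hbw, p, hp⟩ := key a ha
  obtain ⟨d, hd, hdw, q, hq⟩ := key c hc
  obtain ⟨r, hr⟩ := (Subgraph.preconnected_iff_forall_exists_walk_subgraph (B.deleteVerts {w})).1
    ⟨hB.2 w⟩ (u := b) (v := d) ⟨hb, hbw⟩ ⟨hd, hdw⟩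
  refine ⟨(p.append r).append q.reverse, ?_⟩
  rw [Walk.toSubgraph_append, Walk.toSubgraph_append, Walk.toSubgraph_reverse]
  exact sup_le (sup_le hp (hr.trans hBle)) hq

lemma path_le_block {G : SimpleGraph V} {B : G.Subgraph} (hB : IsBlock G B) {x y : V}
    (hx : x ∈ B.verts) (hy : y ∈ B.verts) (p : G.Walk x y) (hp : p.IsPath) :
    p.toSubgraph ≤ B := by
  by_cases hxy : x = y
  · subst hxy
    obtain rfl := Walk.eq_nil_iff_nil.2 (Walk.isPath_iff_nil.1 hp)
    simpa [Walk.toSubgraph] using hx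
  have hN : NoCutVertexSub G (B ⊔ p.toSubgraph) := by
    refine noCut_sup hB.1 ?_ ?_
    · exact Subgraph.connected_sup hB.1.1.preconnected p.toSubgraph_connected.preconnected
        ⟨x, hx, p.start_mem_verts_toSubgraph⟩
    · intro w h hh hw
      have hh' : h ∈ p.support := p.mem_verts_toSubgraph.1 hh
      have hsub : (p.takeUntil h hh').toSubgraph ⊔ (p.dropUntil h hh').toSubgraph
          = p.toSubgraph := by
        rw [← Walk.toSubgraph_append, Walk.take_spec]
      by_cases h1 : w ∈ (p.takeUntil h hh').support
      · have h2 : w ∉ (p.dropUntil h hh').support := by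
          intro h2
          have hnd := hp.support_nodup
          rw [← Walk.take_spec p hh', Walk.support_append, List.nodup_append'] at hnd
          rw [Walk.mem_support_iff] at h2
          rcases h2 with h2 | h2
          · exact hw h2.symm
          · exact hnd.2.2 h1 h2
        refine ⟨y, hy, ?_, p.dropUntil h hh', ?_⟩
        · rintro rfl; exact h2 (Walk.end_mem_support _)
        · apply le_deleteVerts
          · rw [← hsub]; exact le_sup_right
          · rwa [Walk.mem_verts_toSubgraph]
      · refine ⟨x, hx, ?_, (p.takeUntil h hh').reverse, ?_⟩
        · rintro rfl; exact h1 (Walk.start_mem_support _)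
        · rw [Walk.toSubgraph_reverse]
          apply le_deleteVerts
          · rw [← hsub]; exact le_sup_left
          · rwa [Walk.mem_verts_toSubgraph]
  have := hB.2 _ hN le_sup_left
  rw [this]; exact le_sup_right

lemma exists_block [Fintype V] {G : SimpleGraph V} {s t : V} (h : G.Adj s t) :
    ∃ B : G.Subgraph, IsBlock G B ∧ B.Adj s t := by
  have h0 : NoCutVertexSub G (G.subgraphOfAdj h) := by
    refine ⟨Subgraph.subgraphOfAdj_connected h, fun w => ?_⟩
    have := (Subgraph.preconnected_iff_forall_exists_walk_subgraph
      ((G.subgraphOfAdj h).deleteVerts {w})).2 ?_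
    · exact this.coe
    intro a b ha hb
    by_cases hab : a = b
    · subst hab
      exact ⟨Walk.nil, by simpa [Walk.toSubgraph] using ha⟩
    · have ha1 : a = s ∨ a = t := by simpa using ha.1
      have hb1 : b = s ∨ b = t := by simpa using hb.1
      have hA : G.Adj a b := by
        rcases ha1 with rfl | rfl <;> rcases hb1 with rfl | rfl <;>
          first | exact absurd rfl hab | exact h | exact h.symm
      refine ⟨hA.toWalk, ?_⟩
      rw [Adj.toSubgraph_toWalk]
      apply subgraphOfAdj_le_of_adj
      rw [Subgraph.deleteVerts_adj]
      refine ⟨ha.1, ha.2, hb.1, hb.2, ?_⟩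
      rcases ha1 with rfl | rfl <;> rcases hb1 with rfl | rfl <;> simp_all
  obtain ⟨B, hle, hB⟩ := (Set.toFinite {H : G.Subgraph | NoCutVertexSub G H}).exists_le_maximal h0
  refine ⟨B, ⟨hB.1, fun H hH hBH => le_antisymm hBH (hB.2 hH hBH)⟩, hle.2 ?_⟩
  simp

/-- walks into a block pass through the attachment vertex -/
lemma attach_mem_support {G : SimpleGraph V} {B : G.Subgraph}  (hB : IsBlock G B) {p b : V}
    (hp : p ∈ B.verts) (hb : b ∈ B.verts) {u : V} (w : G.Walk u b)
    (hu : (G.deleteEdges B.edgeSet).Reachable u p) : p ∈ w.support := by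
  induction w with
  | nil =>
    rename_i b
    obtain ⟨q, hq⟩ := hu.exists_isPath
    by_contra hne
    have hbp : b ≠ p := by rintro rfl; exact hne (by simp)
    have hle := path_le_block hB hb hp (q.mapLe (deleteEdges_le _)) (hq.mapLe _)
    cases q with
    | nil => exact hbp rfl
    | cons h q' =>
      have h1 := hle.2 (v := b) (w := _) (by
        simp [Walk.toSubgraph]; left; left; rfl)
      rw [deleteEdges_adj] at h
      exact h.2 h1
  | cons h w ih =>
    rename_i u v b
    by_cases hBuv : B.Adj u v
    · have := ih hb
      have hu' := B.edge_vert hBuv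
      -- `u` is in `B`, hence equals `p`
      by_cases hup : u = p
      · subst hup; simp
      exfalso
      obtain ⟨q, hq⟩ := hu.exists_isPath
      have hle := path_le_block hB hu' hp (q.mapLe (deleteEdges_le _)) (hq.mapLe _)
      cases q with
      | nil => exact hup rfl
      | cons h q' =>
        have h1 := hle.2 (v := u) (w := _) (by
          simp [Walk.toSubgraph]; left; left; rfl)
        rw [deleteEdges_adj] at h
        exact h.2 h1
    · have hadj : (G.deleteEdges B.edgeSet).Adj u v := by
        rw [deleteEdges_adj]; exact ⟨h, hBuv⟩
      have := ih hb (hadj.symm.reachable.trans hu)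
      simp [this]

lemma exists_attach {G : SimpleGraph V} {B : G.Subgraph} {b : V} (hb : b ∈ B.verts) {u : V}
    (w : G.Walk u b) :
    ∃ p ∈ B.verts, (G.deleteEdges B.edgeSet).Reachable u p := by
  induction w with
  | nil => exact ⟨_, hb, Reachable.refl _⟩
  | cons h w ih =>
    rename_i u v b
    by_cases hBuv : B.Adj u v
    · exact ⟨u, B.edge_vert hBuv, Reachable.refl _⟩
    · have hadj : (G.deleteEdges B.edgeSet).Adj u v := by
        rw [deleteEdges_adj]; exact ⟨h, hBuv⟩
      obtain ⟨p, hp, hr⟩ := ih hb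
      exact ⟨p, hp, hadj.reachable.trans hr⟩

lemma dist_attach {G : SimpleGraph V} (hG : G.Connected) {B : G.Subgraph} (hB : IsBlock G B)
    {p b : V} (hp : p ∈ B.verts) (hb : b ∈ B.verts) {u : V}
    (hu : (G.deleteEdges B.edgeSet).Reachable u p) :
    G.dist u b = G.dist u p + G.dist p b := by
  obtain ⟨w, hw⟩ := hG.exists_walk_length_eq_dist u b
  have hm := attach_mem_support hB hp hb w hu
  apply le_antisymm hG.dist_triangle
  rw [← hw]
  conv_rhs => rw [← Walk.take_spec w hm, Walk.length_append]
  exact add_le_add (dist_le _) (dist_le _)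


/-- The distance on the cycle of length `n`, in coordinates. -/
def cyc (n a i : ℕ) : ℕ := min ((a - i) + (i - a)) (n - ((a - i) + (i - a)))

lemma cycleGraph_adj_nat {n : ℕ} (hn : 3 ≤ n) (u v : Fin n) :
    (cycleGraph n).Adj u v ↔ (u.1 + 1 = v.1 ∨ v.1 + 1 = u.1 ∨ (u.1 = 0 ∧ v.1 + 1 = n) ∨
      (v.1 = 0 ∧ u.1 + 1 = n)) := by
  have key : ∀ a b : Fin n, (a - b).val = 1 ↔ (b.1 + 1 = a.1 ∨ (a.1 = 0 ∧ b.1 + 1 = n)) := by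
    intro a b
    have ha := a.2
    have hb := b.2
    rw [Fin.sub_def]
    simp only
    by_cases h : b.1 ≤ a.1
    · have : (n - b.1 + a.1) = (a.1 - b.1) + n := by omega
      rw [this, Nat.add_mod_right, Nat.mod_eq_of_lt (by omega)]
      omega
    · rw [Nat.mod_eq_of_lt (by omega)]
      omega
  rw [cycleGraph_adj', key, key]
  omega

lemma cyc_le_length {n : ℕ} (hn : 3 ≤ n) {a b : Fin n} (w : (cycleGraph n).Walk a b) :
    cyc n a b ≤ w.length := by
  induction w with
  | nil => simp [cyc]
  | cons h w ih =>
    rename_i u v b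
    rw [cycleGraph_adj_nat hn] at h
    rw [Walk.length_cons]
    have := u.2
    have := v.2
    have := b.2
    unfold cyc at *
    omega

lemma exists_closer {n a b k : ℕ} (hn : 3 ≤ n) (ha : a < n) (hb : b < n)
    (h : cyc n a b = k + 1) : ∃ c, c < n ∧ (c + 1 = b ∨ b + 1 = c ∨ (c = 0 ∧ b + 1 = n) ∨
      (b = 0 ∧ c + 1 = n)) ∧ cyc n a c = k := by
  unfold cyc at *
  by_cases hab : a ≤ b
  · by_cases h2 : 2 * (b - a) ≤ n
    · refine ⟨b - 1, ?_, ?_, ?_⟩ <;> omega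
    · by_cases h3 : b + 1 = n
      · refine ⟨0, ?_, ?_, ?_⟩ <;> omega
      · refine ⟨b + 1, ?_, ?_, ?_⟩ <;> omega
  · by_cases h2 : 2 * (a - b) ≤ n
    · refine ⟨b + 1, ?_, ?_, ?_⟩ <;> omega
    · by_cases h3 : b = 0
      · refine ⟨n - 1, ?_, ?_, ?_⟩ <;> omega
      · refine ⟨b - 1, ?_, ?_, ?_⟩ <;> omega

lemma exists_walk_cyc {n : ℕ} (hn : 3 ≤ n) (k : ℕ) : ∀ a b : Fin n, cyc n a b = k →
    ∃ w : (cycleGraph n).Walk a b, w.length = k := by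
  induction k with
  | zero =>
    intro a b h
    have ha := a.2
    have hb := b.2
    have : a = b := by
      apply Fin.ext
      unfold cyc at h
      omega
    subst this
    exact ⟨Walk.nil, rfl⟩
  | succ k ih =>
    intro a b h
    have ha := a.2
    have hb := b.2
    have : ∃ c : Fin n, (cycleGraph n).Adj c b ∧ cyc n a c = k := by
      obtain ⟨c, hc, h1, h2⟩ := exists_closer hn ha hb h
      exact ⟨⟨c, hc⟩, (cycleGraph_adj_nat hn _ _).2 h1, h2⟩
    obtain ⟨c, hc, hk⟩ := this
    obtain ⟨w, hw⟩ := ih a c hk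
    exact ⟨w.concat hc, by simp [hw]⟩

lemma cyc_step_in {n a b i : ℕ} (hb : b < n) (h1 : a ≤ i) (h2 : i < b) :
    (cyc n b (i+1) : ℤ) - cyc n b i ≤ (cyc n a (i+1) : ℤ) - cyc n a i := by
  unfold cyc; omega

lemma cyc_step_lt {n a b i : ℕ} (hab : a ≤ b) (hb : b < n) (h1 : i < a) :
    (cyc n a (i+1) : ℤ) - cyc n a i ≤ (cyc n b (i+1) : ℤ) - cyc n b i := by
  unfold cyc; omega

lemma cyc_step_gt {n a b i : ℕ} (hab : a ≤ b) (h1 : b ≤ i) (h2 : i < n) :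
    (cyc n a (i+1) : ℤ) - cyc n a i ≤ (cyc n b (i+1) : ℤ) - cyc n b i := by
  unfold cyc; omega

lemma sum_range_tv {n a b : ℕ} (hab : a ≤ b) (hb : b < n) :
    ∑ i ∈ Finset.range n, |((cyc n a (i+1) : ℤ) - cyc n a i) - ((cyc n b (i+1) : ℤ) - cyc n b i)|
      = 4 * cyc n a b := by
  have aux : ∀ (f : ℕ → ℤ) (k l : ℕ), k ≤ l → ∑ i ∈ Finset.Ico k l, (f (i+1) - f i) = f l - f k :=
    fun f k l h => Finset.sum_Ico_sub f h
  set f : ℕ → ℤ := fun i => (cyc n a i : ℤ) - cyc n b i with hf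
  have h1 : ∑ i ∈ Finset.Ico 0 a,
      |((cyc n a (i+1) : ℤ) - cyc n a i) - ((cyc n b (i+1) : ℤ) - cyc n b i)| = f 0 - f a := by
    rw [← neg_sub, ← aux f 0 a (by omega), ← Finset.sum_neg_distrib]
    refine Finset.sum_congr rfl fun i hi => ?_
    rw [Finset.mem_Ico] at hi
    rw [abs_of_nonpos (sub_nonpos.2 (cyc_step_lt hab hb hi.2))]
    simp only [hf]; ring
  have h2 : ∑ i ∈ Finset.Ico a b,
      |((cyc n a (i+1) : ℤ) - cyc n a i) - ((cyc n b (i+1) : ℤ) - cyc n b i)| = f b - f a := by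
    rw [← aux f a b hab]
    refine Finset.sum_congr rfl fun i hi => ?_
    rw [Finset.mem_Ico] at hi
    rw [abs_of_nonneg (sub_nonneg.2 (cyc_step_in hb hi.1 hi.2))]
    simp only [hf]; ring
  have h3 : ∑ i ∈ Finset.Ico b n,
      |((cyc n a (i+1) : ℤ) - cyc n a i) - ((cyc n b (i+1) : ℤ) - cyc n b i)| = f b - f n := by
    rw [← neg_sub, ← aux f b n (by omega), ← Finset.sum_neg_distrib]
    refine Finset.sum_congr rfl fun i hi => ?_
    rw [Finset.mem_Ico] at hi
    rw [abs_of_nonpos (sub_nonpos.2 (cyc_step_gt hab hi.1 hi.2))]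
    simp only [hf]; ring
  rw [Finset.range_eq_Ico, ← Finset.sum_Ico_consecutive _ (Nat.zero_le a) (by omega : a ≤ n),
    ← Finset.sum_Ico_consecutive _ hab hb.le, h1, h2, h3]
  simp only [hf]
  have e1 : cyc n a 0 = cyc n a n := by unfold cyc; omega
  have e2 : cyc n b 0 = cyc n b n := by unfold cyc; omega
  have e3 : cyc n a a = 0 := by unfold cyc; omega
  have e4 : cyc n b b = 0 := by unfold cyc; omega
  have e5 : cyc n b a = cyc n a b := by unfold cyc; omega
  rw [e1, e2, e3, e4, e5]
  push_cast
  ring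

lemma cyc_comm (n a b : ℕ) : cyc n a b = cyc n b a := by unfold cyc; omega

lemma sum_range_tv' {n a b : ℕ} (ha : a < n) (hb : b < n) :
    ∑ i ∈ Finset.range n, |((cyc n a (i+1) : ℤ) - cyc n a i) - ((cyc n b (i+1) : ℤ) - cyc n b i)|
      = 4 * cyc n a b := by
  rcases le_total a b with h | h
  · exact sum_range_tv h hb
  · rw [cyc_comm, ← sum_range_tv h ha]
    exact Finset.sum_congr rfl fun i _ => abs_sub_comm _ _

lemma sum_cycle {n : ℕ} (hn : 3 ≤ n) (a b : Fin n) :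
    ∑ i : Fin n, ∑ j : Fin n, (if (cycleGraph n).Adj i j then
      |((cyc n a j : ℤ) - cyc n a i) - ((cyc n b j : ℤ) - cyc n b i)| else 0)
      = 8 * cyc n a b := by
  set F : Fin n → Fin n → ℤ := fun i j =>
    |((cyc n a j : ℤ) - cyc n a i) - ((cyc n b j : ℤ) - cyc n b i)| with hF
  have hsymm : ∀ i j, F i j = F j i := by
    intro i j
    simp only [hF]
    rw [← abs_neg]
    congr 1; ring
  let nx : Fin n → Fin n := fun i => if h : i.1 + 1 < n then ⟨i.1 + 1, h⟩ else ⟨0, by omega⟩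
  have hnx : ∀ i, (nx i).1 = if i.1 + 1 < n then i.1 + 1 else 0 := by
    intro i; simp only [nx]; split_ifs <;> rfl
  have hadj : ∀ i j, (if (cycleGraph n).Adj i j then F i j else 0)
      = (if j = nx i then F i j else 0) + (if i = nx j then F i j else 0) := by
    intro i j
    have h1 := hnx i
    have h2 := hnx j
    have hi := i.2
    have hj := j.2
    simp only [cycleGraph_adj_nat hn, Fin.ext_iff, h1, h2]
    by_cases c1 : j.1 = if i.1 + 1 < n then i.1 + 1 else 0
    · have c2 : ¬ (i.1 = if j.1 + 1 < n then j.1 + 1 else 0) := by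
        split_ifs at * <;> omega
      rw [if_pos c1, if_neg c2, if_pos (by split_ifs at * <;> omega), add_zero]
    · by_cases c2 : i.1 = if j.1 + 1 < n then j.1 + 1 else 0
      · rw [if_neg c1, if_pos c2, if_pos (by split_ifs at * <;> omega), zero_add]
      · rw [if_neg c1, if_neg c2, if_neg (by split_ifs at * <;> omega), zero_add]
  have hone : ∑ i : Fin n, F i (nx i) = 4 * cyc n a b := by
    rw [← sum_range_tv' a.2 b.2, Finset.sum_range]
    refine Finset.sum_congr rfl fun i _ => ?_
    have e : ∀ c : Fin n, cyc n c (nx i) = cyc n c (i.1 + 1) := by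
      intro c
      have := c.2
      have := i.2
      rw [hnx]
      unfold cyc
      split_ifs <;> omega
    simp only [hF, e]
  calc _ = ∑ i : Fin n, ∑ j : Fin n, ((if j = nx i then F i j else 0)
        + (if i = nx j then F i j else 0)) :=
        Finset.sum_congr rfl fun i _ => Finset.sum_congr rfl fun j _ => hadj i j
    _ = ∑ i : Fin n, F i (nx i) + ∑ j : Fin n, F (nx j) j := by
        simp only [Finset.sum_add_distrib]
        congr 1
        · refine Finset.sum_congr rfl fun i _ => ?_
          simp
        · rw [Finset.sum_comm]
          refine Finset.sum_congr rfl fun i _ => ?_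
          simp
    _ = 8 * cyc n a b := by
        rw [Finset.sum_congr rfl fun j _ => hsymm (nx j) j, hone]; ring

/-- Coordinates on a cycle block. -/
lemma exists_coords {G : SimpleGraph V} (hG : G.Connected) {B : G.Subgraph} (hB : IsBlock G B)
    (hc : IsCycleBlock G B) : ∃ n : ℕ, 3 ≤ n ∧ ∃ x : Fin n → V, Function.Injective x ∧
      (∀ v, v ∈ B.verts ↔ ∃ i, x i = v) ∧ (∀ i j, B.Adj (x i) (x j) ↔ (cycleGraph n).Adj i j) ∧
      ∀ i j, G.dist (x i) (x j) = cyc n i j := by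
  obtain ⟨n, hn, ⟨φ⟩⟩ := hc
  refine ⟨n, hn, fun i => (φ.symm i).1, ?_, ?_, ?_, ?_⟩
  · intro i j h
    exact φ.symm.injective (Subtype.ext h)
  · intro v
    constructor
    · intro hv
      exact ⟨φ ⟨v, hv⟩, by simp⟩
    · rintro ⟨i, rfl⟩
      exact (φ.symm i).2
  · intro i j
    exact φ.symm.map_rel_iff'
  · intro i j
    apply le_antisymm
    · obtain ⟨w, hw⟩ := exists_walk_cyc hn _ i j rfl
      have := dist_le ((w.map φ.symm.toHom).map B.hom)
      rw [Walk.length_map, Walk.length_map, hw] at this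
      exact this
    · obtain ⟨p, hp, hl⟩ := hG.exists_path_of_dist (φ.symm i).1 (φ.symm j).1
      rw [← hl]
      have hle := path_le_block hB (φ.symm i).2 (φ.symm j).2 p hp
      have key : ∀ {u v : V} (p : G.Walk u v) (h : p.toSubgraph ≤ B) (hu : u ∈ B.verts)
          (hv : v ∈ B.verts), cyc n (φ ⟨u, hu⟩) (φ ⟨v, hv⟩) ≤ p.length := by
        intro u v p
        induction p with
        | nil => intros; simp [cyc]
        | cons h p ih =>
          rename_i u v z
          intro hle hu hz
          simp only [Walk.toSubgraph, sup_le_iff] at hle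
          have hA : B.Adj u v := hle.1.2 (by simp)
          have hv := B.edge_vert hA.symm
          have h1 := ih hle.2 hv hz
          have h2 : (cycleGraph n).Adj (φ ⟨u, hu⟩) (φ ⟨v, hv⟩) := φ.map_rel_iff'.2 hA
          rw [cycleGraph_adj_nat hn] at h2
          rw [Walk.length_cons]
          have := (φ ⟨u, hu⟩).2
          have := (φ ⟨v, hv⟩).2
          have := (φ ⟨z, hz⟩).2
          unfold cyc at *
          omega
      simpa using key p hle (φ.symm i).2 (φ.symm j).2

/-- signed distance difference -/
noncomputable def gd (G : SimpleGraph V) (s t u : V) : ℤ := (G.dist u t : ℤ) - G.dist u s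

lemma block_sum [Fintype V] {G : SimpleGraph V} (hG : G.Connected) {B : G.Subgraph}
    (hB : IsBlock G B) (hc : IsCycleBlock G B) {p v : V} (hp : p ∈ B.verts) (hv : v ∈ B.verts) :
    ∑ s : V, ∑ t : V, (if B.Adj s t then |gd G s t p - gd G s t v| else 0) = 8 * G.dist p v := by
  obtain ⟨n, hn, x, hinj, hverts, hadj, hdist⟩ := exists_coords hG hB hc
  obtain ⟨a, rfl⟩ := (hverts p).1 hp
  obtain ⟨b, rfl⟩ := (hverts v).1 hv
  rw [hdist, ← sum_cycle hn a b]
  symm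
  refine Fintype.sum_of_injective x hinj _ _ ?_ ?_
  · intro s hs
    refine Finset.sum_eq_zero fun t _ => if_neg fun h => hs ?_
    exact (hverts s).1 (B.edge_vert h)
  · intro i
    refine Fintype.sum_of_injective x hinj _ _ ?_ ?_
    · intro t ht
      refine if_neg fun h => ht ?_
      exact (hverts t).1 (B.edge_vert h.symm)
    · intro j
      simp only [gd, hdist, hadj]

lemma gd_block_const {G : SimpleGraph V} (hG : G.Connected) {B : G.Subgraph}
    (hB : IsBlock G B) {v v' s t : V} (hv : v ∈ B.verts) (hv' : v' ∈ B.verts)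
    (h : G.Adj s t) (hn : ¬ B.Adj s t) : gd G s t v = gd G s t v' := by
  obtain ⟨w⟩ := hG.preconnected s v
  obtain ⟨q, hq, hr⟩ := exists_attach hv w
  have hadj : (G.deleteEdges B.edgeSet).Adj s t := by
    rw [deleteEdges_adj]; exact ⟨h, hn⟩
  have hr' := hadj.symm.reachable.trans hr
  unfold gd
  rw [dist_comm (u := v), dist_comm (u := v), dist_comm (u := v'), dist_comm (u := v'),
    dist_attach hG hB hq hv hr, dist_attach hG hB hq hv hr',
    dist_attach hG hB hq hv' hr, dist_attach hG hB hq hv' hr']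
  push_cast; ring

lemma gd_attach {G : SimpleGraph V} (hG : G.Connected) {B : G.Subgraph}
    (hB : IsBlock G B) {u p s t : V} (hp : p ∈ B.verts)
    (hu : (G.deleteEdges B.edgeSet).Reachable u p) (hs : s ∈ B.verts) (ht : t ∈ B.verts) :
    gd G s t u = gd G s t p := by
  unfold gd
  rw [dist_attach hG hB hp hs hu, dist_attach hG hB hp ht hu]
  push_cast; ring

lemma step [Fintype V] {G : SimpleGraph V} (hG : G.Connected)
    (hblocks : ∀ B : G.Subgraph, IsBlock G B → IsCycleBlock G B) (u : V) {v v' : V}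
    (h : G.Adj v v') :
    ∑ s : V, ∑ t : V, (if G.Adj s t then |gd G s t u - gd G s t v| else 0) - 8 * G.dist u v
    = ∑ s : V, ∑ t : V, (if G.Adj s t then |gd G s t u - gd G s t v'| else 0)
      - 8 * G.dist u v' := by
  obtain ⟨B, hB, hA⟩ := exists_block h
  have hv := B.edge_vert hA
  have hv' := B.edge_vert hA.symm
  obtain ⟨w⟩ := hG.preconnected u v
  obtain ⟨p, hp, hr⟩ := exists_attach hv w
  have split : ∀ z, z ∈ B.verts →
      ∑ s : V, ∑ t : V, (if G.Adj s t then |gd G s t u - gd G s t z| else 0) =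
      ∑ s : V, ∑ t : V, (if B.Adj s t then |gd G s t p - gd G s t z| else 0) +
      ∑ s : V, ∑ t : V, (if G.Adj s t ∧ ¬ B.Adj s t then |gd G s t u - gd G s t v| else 0) := by
    intro z hz
    simp only [← Finset.sum_add_distrib]
    refine Finset.sum_congr rfl fun s _ => Finset.sum_congr rfl fun t _ => ?_
    by_cases h1 : B.Adj s t
    · have h2 : G.Adj s t := h1.adj_sub
      rw [gd_attach hG hB hp hr (B.edge_vert h1) (B.edge_vert h1.symm)]
      simp [h1, h2]
    · by_cases h2 : G.Adj s t
      · rw [gd_block_const hG hB hv hz h2 h1]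
        simp [h1, h2]
      · simp [h1, h2]
  rw [split v hv, split v' hv', block_sum hG hB (hblocks B hB) hp hv,
    block_sum hG hB (hblocks B hB) hp hv', dist_attach hG hB hp hv hr,
    dist_attach hG hB hp hv' hr]
  push_cast; ring

lemma main_pair [Fintype V] {G : SimpleGraph V} (hG : G.Connected)
    (hblocks : ∀ B : G.Subgraph, IsBlock G B → IsCycleBlock G B) (u v : V) :
    ∑ s : V, ∑ t : V, (if G.Adj s t then |gd G s t u - gd G s t v| else 0)
      = 8 * G.dist u v := by
  obtain ⟨w⟩ := hG.preconnected v u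
  rw [← sub_eq_zero]
  induction w with
  | nil => simp
  | cons h w ih => rw [step hG hblocks _ h]; exact ih

lemma sum_adj [Fintype V] (G : SimpleGraph V) (F : Sym2 V → ℚ) :
    ∑ s : V, ∑ t : V, (if G.Adj s t then F s(s, t) else 0) = 2 * ∑ e ∈ G.edgeFinset, F e := by
  have h1 : ∑ d : G.Dart, F d.edge = 2 * ∑ e ∈ G.edgeFinset, F e := by
    rw [← Finset.sum_fiberwise_of_maps_to (s := Finset.univ) (t := G.edgeFinset)
      (g := fun d : G.Dart => d.edge) (fun d _ => by simpa using d.edge_mem), Finset.mul_sum]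
    refine Finset.sum_congr rfl fun e he => ?_
    rw [Finset.sum_congr rfl (g := fun _ => F e) (fun d hd => by
      rw [(Finset.mem_filter.1 hd).2]), Finset.sum_const]
    have := G.dart_edge_fiber_card e (by simpa using he)
    simp only [nsmul_eq_mul]
    congr 1
    exact_mod_cast (by convert this)
  rw [← h1, ← Finset.sum_product', ← Finset.sum_filter]
  symm
  refine Finset.sum_bij (fun d _ => d.toProd) ?_ ?_ ?_ ?_
  · intro d _; simpa using d.adj
  · intro d _ d' _ h; exact Dart.ext _ _ h
  · rintro ⟨s, t⟩ h
    exact ⟨⟨(s, t), by simpa using h⟩, Finset.mem_univ _, rfl⟩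
  · intro d _; rfl

lemma two_wiener [Fintype V] (G : SimpleGraph V) :
    ∑ u : V, ∑ v : V, (G.dist u v : ℚ) = 2 * (wiener G : ℚ) := by
  have := sum_adj (⊤ : SimpleGraph V)
    (fun e => ((Sym2.lift ⟨fun u v => G.dist u v, fun _ _ => G.dist_comm⟩ e : ℕ) : ℚ))
  have h2 : ∑ e ∈ (⊤ : SimpleGraph V).edgeFinset,
      ((Sym2.lift ⟨fun u v => G.dist u v, fun _ _ => G.dist_comm⟩ e : ℕ) : ℚ) = wiener G := by
    unfold wiener
    push_cast
    refine Finset.sum_subset (Finset.subset_univ _) ?_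
    intro e _ he
    induction e with
    | _ a b =>
      have : a = b := by simpa using he
      subst this
      simp
  have h3 := this.trans (congrArg (fun z : ℚ => 2 * z) (a₂ := (wiener G : ℚ)) (by convert h2))
  refine Eq.trans ?_ h3
  refine Finset.sum_congr rfl fun u _ => Finset.sum_congr rfl fun v _ => ?_
  by_cases h : u = v
  · subst h; simp
  · simp [h]

lemma gd_cases {G : SimpleGraph V} (hG : G.Connected) {s t : V} (h : G.Adj s t) (u : V) :
    gd G s t u = 1 ∨ gd G s t u = 0 ∨ gd G s t u = -1 := by
  have h1 := h.diff_dist_adj (u := u)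
  unfold gd
  omega

lemma edge_sum [Fintype V] {G : SimpleGraph V} (hG : G.Connected) {s t : V} (h : G.Adj s t) :
    (∑ u : V, ∑ v : V, (|gd G s t u - gd G s t v| : ℚ)) =
      4 * (((closerCount G s t : ℚ) + (equidistCount G s t : ℚ) / 2) *
        ((closerCount G t s : ℚ) + (equidistCount G t s : ℚ) / 2)) -
        (equidistCount G s t : ℚ) ^ 2 := by
  have hI : ∀ u v, (|gd G s t u - gd G s t v| : ℚ) = 1 - (gd G s t u : ℚ) * gd G s t v
      - (1 - (gd G s t u : ℚ)^2) * (1 - (gd G s t v : ℚ)^2) := by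
    intro u v
    rcases gd_cases hG h u with h1 | h1 | h1 <;> rcases gd_cases hG h v with h2 | h2 | h2 <;>
      rw [h1, h2] <;> norm_num
  have e1 : (∑ u : V, (gd G s t u : ℚ)) = (closerCount G s t : ℚ) - closerCount G t s := by
    unfold closerCount
    rw [Finset.card_filter, Finset.card_filter]
    push_cast
    rw [← Finset.sum_sub_distrib]
    refine Finset.sum_congr rfl fun u _ => ?_
    rcases gd_cases hG h u with h1 | h1 | h1 <;> rw [h1] <;> unfold gd at h1
    · rw [if_pos (by omega), if_neg (by omega)]; norm_num
    · rw [if_neg (by omega), if_neg (by omega)]; norm_num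
    · rw [if_neg (by omega), if_pos (by omega)]; norm_num
  have e2 : (∑ u : V, (1 - (gd G s t u : ℚ)^2)) = (equidistCount G s t : ℚ) := by
    unfold equidistCount
    rw [Finset.card_filter]
    push_cast
    refine Finset.sum_congr rfl fun u _ => ?_
    rcases gd_cases hG h u with h1 | h1 | h1 <;> rw [h1] <;> unfold gd at h1
    · rw [if_neg (by omega)]; norm_num
    · rw [if_pos (by omega)]; norm_num
    · rw [if_neg (by omega)]; norm_num
  have e3 : (∑ u : V, (1 : ℚ)) = (closerCount G s t : ℚ) + closerCount G t s
      + equidistCount G s t := by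
    unfold closerCount equidistCount
    rw [Finset.card_filter, Finset.card_filter, Finset.card_filter]
    push_cast
    rw [← Finset.sum_add_distrib, ← Finset.sum_add_distrib]
    refine Finset.sum_congr rfl fun u _ => ?_
    rcases lt_trichotomy (G.dist u s) (G.dist u t) with h1 | h1 | h1
    · rw [if_pos (by omega), if_neg (by omega), if_neg (by omega)]; norm_num
    · rw [if_neg (by omega), if_neg (by omega), if_pos (by omega)]; norm_num
    · rw [if_neg (by omega), if_pos (by omega), if_neg (by omega)]; norm_num
  have e4 : (∑ u : V, ∑ v : V, (1 : ℚ)) = (∑ u : V, (1 : ℚ)) * ∑ u : V, (1 : ℚ) := by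
    rw [Finset.sum_mul_sum]; simp
  simp only [hI, Finset.sum_sub_distrib]
  rw [← Finset.sum_mul_sum, ← Finset.sum_mul_sum, e1, e4, e3]
  rw [e2, equidistCount_comm G t s]
  ring

lemma main_identity [Fintype V] {G : SimpleGraph V} (hG : G.Connected)
    (hblocks : ∀ B : G.Subgraph, IsBlock G B → IsCycleBlock G B) :
    16 * (wiener G : ℚ) = 8 * revisedSzeged G -
      ∑ s : V, ∑ t : V, (if G.Adj s t then (equidistCount G s t : ℚ) ^ 2 else 0) := by
  have hS := sum_adj G (Sym2.lift ⟨fun s t =>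
      ((closerCount G s t : ℚ) + (equidistCount G s t : ℚ) / 2) *
        ((closerCount G t s : ℚ) + (equidistCount G t s : ℚ) / 2),
      fun _ _ => mul_comm _ _⟩)
  change _ = 2 * revisedSzeged G at hS
  simp only [Sym2.lift_mk] at hS
  have hW := two_wiener G
  have h1 : ∑ u : V, ∑ v : V, ∑ s : V, ∑ t : V,
      (if G.Adj s t then (|gd G s t u - gd G s t v| : ℚ) else 0) = 16 * (wiener G : ℚ) := by
    rw [show 16 * (wiener G : ℚ) = 8 * (2 * (wiener G : ℚ)) by ring, ← hW, Finset.mul_sum]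
    refine Finset.sum_congr rfl fun u _ => ?_
    rw [Finset.mul_sum]
    refine Finset.sum_congr rfl fun v _ => ?_
    have := main_pair hG hblocks u v
    exact_mod_cast this
  rw [← h1, show 8 * revisedSzeged G = 4 * (2 * revisedSzeged G) by ring, ← hS, Finset.mul_sum,
    ← Finset.sum_sub_distrib]
  have swap : ∑ u : V, ∑ v : V, ∑ s : V, ∑ t : V,
      (if G.Adj s t then (|gd G s t u - gd G s t v| : ℚ) else 0)
      = ∑ s : V, ∑ t : V, ∑ u : V, ∑ v : V,
      (if G.Adj s t then (|gd G s t u - gd G s t v| : ℚ) else 0) := by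
    have c1 : ∀ f : V → V → V → V → ℚ, ∑ u, ∑ v, ∑ s, ∑ t, f u v s t
        = ∑ s, ∑ t, ∑ u, ∑ v, f u v s t := by
      intro f
      calc _ = ∑ u, ∑ s, ∑ v, ∑ t, f u v s t :=
            Finset.sum_congr rfl fun u _ => Finset.sum_comm
        _ = ∑ s, ∑ u, ∑ v, ∑ t, f u v s t := Finset.sum_comm
        _ = ∑ s, ∑ u, ∑ t, ∑ v, f u v s t :=
            Finset.sum_congr rfl fun s _ => Finset.sum_congr rfl fun u _ => Finset.sum_comm
        _ = ∑ s, ∑ t, ∑ u, ∑ v, f u v s t :=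
            Finset.sum_congr rfl fun s _ => Finset.sum_comm
    exact c1 _
  rw [swap]
  refine Finset.sum_congr rfl fun s _ => ?_
  rw [Finset.mul_sum, ← Finset.sum_sub_distrib]
  refine Finset.sum_congr rfl fun t _ => ?_
  by_cases h : G.Adj s t
  · simp only [if_pos h]
    exact edge_sum hG h
  · simp [h]

lemma even_of_equidist [Fintype V] {G : SimpleGraph V} (hG : G.Connected)
    (h : ∀ s t, G.Adj s t → equidistCount G s t = 0) (v : V) (c : G.Walk v v) :
    Even c.length := by
  have key : ∀ {a b : V} (w : G.Walk a b), (w.length + G.dist v a + G.dist v b) % 2 = 0 := by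
    intro a b w
    induction w with
    | nil => simp only [Walk.length_nil]; omega
    | cons hadj w ih =>
      rename_i a b z
      have h0 := h _ _ hadj
      unfold equidistCount at h0
      rw [Finset.card_eq_zero, Finset.filter_eq_empty_iff] at h0
      have h1 := h0 (Finset.mem_univ v)
      have h2 := hadj.diff_dist_adj (u := v)
      rw [Walk.length_cons]
      omega
  have := key c
  rw [Nat.even_iff]
  omega

lemma equidist_of_even [Fintype V] {G : SimpleGraph V} (hG : G.Connected)
    (hblocks : ∀ B : G.Subgraph, IsBlock G B → IsCycleBlock G B)
    (h : ∀ (v : V) (c : G.Walk v v), c.IsCycle → Even c.length) {s t : V} (hst : G.Adj s t) :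
    equidistCount G s t = 0 := by
  unfold equidistCount
  rw [Finset.card_eq_zero, Finset.filter_eq_empty_iff]
  intro u _ hu
  obtain ⟨B, hB, hA⟩ := exists_block hst
  have hs := B.edge_vert hA
  have ht := B.edge_vert hA.symm
  obtain ⟨w⟩ := hG.preconnected u s
  obtain ⟨p, hp, hr⟩ := exists_attach hs w
  obtain ⟨n, hn, x, hinj, hverts, hadj, hdist⟩ := exists_coords hG hB (hblocks B hB)
  obtain ⟨a, rfl⟩ := (hverts p).1 hp
  obtain ⟨i, rfl⟩ := (hverts s).1 hs
  obtain ⟨j, rfl⟩ := (hverts t).1 ht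
  rw [dist_attach hG hB hp hs hr, dist_attach hG hB hp ht hr, hdist, hdist] at hu
  rw [hadj, cycleGraph_adj_nat hn] at hA
  obtain ⟨m, rfl⟩ : ∃ m, n = m + 3 := ⟨n - 3, by omega⟩
  let f : cycleGraph (m + 3) →g G := ⟨x, fun {i j} hij => ((hadj i j).2 hij).adj_sub⟩
  have hcyc := h _ ((cycleGraph.cycle m).map f)
    ((cycleGraph.isCycle_cycle).map (f := f) hinj)
  rw [Walk.length_map, cycleGraph.length_cycle, Nat.even_iff] at hcyc
  have := a.2
  have := i.2
  have := j.2
  unfold cyc at hu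
  omega

end CactusAux

/-- **Theorem (equality case).** If every block of a finite simple connected graph `G` is a
cycle, then `2·W(G) = Sz*(G)` if and only if every cycle of `G` has even length. -/
theorem two_wiener_eq_revisedSzeged_iff [Fintype V] (G : SimpleGraph V) (hG : G.Connected)
    (hblocks : ∀ B : G.Subgraph, IsBlock G B → IsCycleBlock G B) :
    2 * (wiener G : ℚ) = revisedSzeged G ↔
      ∀ (v : V) (c : G.Walk v v), c.IsCycle → Even c.length := by
  have hid := CactusAux.main_identity hG hblocks
  have hnn : ∀ s t : V, (0 : ℚ) ≤ (if G.Adj s t then (equidistCount G s t : ℚ) ^ 2 else 0) := by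
    intro s t
    split_ifs <;> positivity
  constructor
  · intro heq v c _
    have h0 : ∑ s : V, ∑ t : V, (if G.Adj s t then (equidistCount G s t : ℚ) ^ 2 else 0) = 0 := by
      linarith
    refine CactusAux.even_of_equidist hG (fun s t hst => ?_) v c
    rw [Finset.sum_eq_zero_iff_of_nonneg fun s _ => Finset.sum_nonneg fun t _ => hnn s t] at h0
    have h1 := h0 s (Finset.mem_univ _)
    rw [Finset.sum_eq_zero_iff_of_nonneg fun t _ => hnn s t] at h1
    have h2 := h1 t (Finset.mem_univ _)
    rw [if_pos hst] at h2
    exact_mod_cast pow_eq_zero_iff (two_ne_zero) |>.1 h2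
  · intro h
    have h0 : ∑ s : V, ∑ t : V, (if G.Adj s t then (equidistCount G s t : ℚ) ^ 2 else 0) = 0 := by
      refine Finset.sum_eq_zero fun s _ => Finset.sum_eq_zero fun t _ => ?_
      split_ifs with hst
      · rw [CactusAux.equidist_of_even hG hblocks h hst]; norm_num
      · rfl
    linarith
end

section
/- Let C be the cycle graph on n ≥ 3 vertices and let u and v be two distinct vertices of C. Then no edge of C is (u,v)-distance-equal; that is, deq_C(u,v) = 0. -/
open Finset

attribute [local instance] Classical.propDecidable

variable {V : Type*}

theorem cyc_adj_iff (n : ℕ) (hn : 3 ≤ n) (u v : Fin n) :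
    (SimpleGraph.cycleGraph n).Adj u v ↔
      (u.val + 1 = v.val ∨ v.val + 1 = u.val ∨ (u.val = 0 ∧ v.val + 1 = n) ∨
        (v.val = 0 ∧ u.val + 1 = n)) := by
  rw [SimpleGraph.cycleGraph_adj']
  have hu := u.isLt
  have hv := v.isLt
  rcases lt_trichotomy u v with h | h | h
  · rw [Fin.coe_sub_iff_lt.mpr h, Fin.coe_sub_iff_le.mpr h.le]
    have : u.val < v.val := h
    omega
  · subst h
    rw [Fin.coe_sub_iff_le.mpr le_rfl]
    omega
  · rw [Fin.coe_sub_iff_lt.mpr h, Fin.coe_sub_iff_le.mpr h.le]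
    have : v.val < u.val := h
    omega

/-- Explicit distance on the cycle. -/
def cycD (n a b : ℕ) : ℕ := min (a - b + (b - a)) (n - (a - b + (b - a)))

theorem cyc_lower (n : ℕ) (hn : 3 ≤ n) (u v : Fin n)
    (p : (SimpleGraph.cycleGraph n).Walk u v) : cycD n u.val v.val ≤ p.length := by
  induction p with
  | nil => simp [cycD]
  | @cons a b c h p ih =>
    rw [cyc_adj_iff n hn] at h
    rw [SimpleGraph.Walk.length_cons]
    unfold cycD at *
    have := a.isLt
    have := b.isLt
    have := c.isLt
    omega

theorem cyc_path (n : ℕ) (hn : 3 ≤ n) (k : ℕ) : ∀ u v : Fin n, u.val + k = v.val →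
    (SimpleGraph.cycleGraph n).dist u v ≤ k := by
  have hc : (SimpleGraph.cycleGraph n).Connected := by
    obtain ⟨m, rfl⟩ : ∃ m, n = m + 1 := ⟨n - 1, by omega⟩
    exact SimpleGraph.cycleGraph_connected
  induction k with
  | zero =>
    intro u v h
    have : u = v := Fin.ext (by omega)
    subst this
    simp
  | succ k ih =>
    intro u v h
    have hv := v.isLt
    have h1 := ih u ⟨u.val + k, by omega⟩ rfl
    have h2 : (SimpleGraph.cycleGraph n).Adj ⟨u.val + k, by omega⟩ v := by
      rw [cyc_adj_iff n hn]
      left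
      exact h
    have h3 := hc.dist_triangle (u := u) (v := ⟨u.val + k, by omega⟩) (w := v)
    rw [SimpleGraph.dist_eq_one_iff_adj.mpr h2] at h3
    omega

theorem cyc_upper (n : ℕ) (hn : 3 ≤ n) (u v : Fin n) (h : u.val ≤ v.val) :
    (SimpleGraph.cycleGraph n).dist u v ≤ cycD n u.val v.val := by
  have hc : (SimpleGraph.cycleGraph n).Connected := by
    obtain ⟨m, rfl⟩ : ∃ m, n = m + 1 := ⟨n - 1, by omega⟩
    exact SimpleGraph.cycleGraph_connected
  have hv := v.isLt
  have h1 := cyc_path n hn (v.val - u.val) u v (by omega)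
  have h2 := cyc_path n hn u.val ⟨0, by omega⟩ u (by simp)
  have h3 := cyc_path n hn (n - 1 - v.val) v ⟨n - 1, by omega⟩ (by simp; omega)
  have h4 : (SimpleGraph.cycleGraph n).Adj ⟨0, by omega⟩ ⟨n - 1, by omega⟩ := by
    rw [cyc_adj_iff n hn]
    exact Or.inr (Or.inr (Or.inl ⟨rfl, Nat.sub_add_cancel (by omega)⟩))
  have h5 := SimpleGraph.dist_eq_one_iff_adj.mpr h4
  have h6 := hc.dist_triangle (u := u) (v := ⟨0, by omega⟩) (w := v)
  have h7 := hc.dist_triangle (u := ⟨0, by omega⟩) (v := ⟨n - 1, by omega⟩) (w := v)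
  have h8 := (SimpleGraph.cycleGraph n).dist_comm (u := u) (v := ⟨0, by omega⟩)
  have h9 := (SimpleGraph.cycleGraph n).dist_comm (u := v) (v := ⟨n - 1, by omega⟩)
  unfold cycD
  omega

theorem cyc_dist (n : ℕ) (hn : 3 ≤ n) (u v : Fin n) :
    (SimpleGraph.cycleGraph n).dist u v = cycD n u.val v.val := by
  have hc : (SimpleGraph.cycleGraph n).Connected := by
    obtain ⟨m, rfl⟩ : ∃ m, n = m + 1 := ⟨n - 1, by omega⟩
    exact SimpleGraph.cycleGraph_connected
  apply le_antisymm
  · rcases le_total u.val v.val with h | h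
    · exact cyc_upper n hn u v h
    · have := cyc_upper n hn v u h
      rw [SimpleGraph.dist_comm]
      unfold cycD at *
      omega
  · obtain ⟨p, hp⟩ := hc.exists_walk_length_eq_dist u v
    rw [← hp]
    exact cyc_lower n hn u v p

theorem cyc_ar1 (n u s : ℕ) (hu : u < n) (hs : s + 1 < n)
    (h : cycD n u s = cycD n u (s + 1)) : 2 * u + n = 2 * s + 1 ∨ 2 * u = 2 * s + 1 + n := by
  unfold cycD at h
  rcases le_total u s with h' | h' <;> omega

theorem cyc_ar2 (n u : ℕ) (hu : u < n)
    (h : cycD n u 0 = cycD n u (n - 1)) : 2 * u + 1 = n := by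
  unfold cycD at h
  omega

theorem cyc_edge (n u s t : ℕ) (hu : u < n) (hs : s < n) (ht : t < n)
    (he : s + 1 = t ∨ t + 1 = s ∨ (s = 0 ∧ t + 1 = n) ∨ (t = 0 ∧ s + 1 = n))
    (h : cycD n u s = cycD n u t) :
    2 * u + n = s + t ∨ 2 * u = s + t + n ∨ 2 * u = s + t := by
  rcases he with rfl | rfl | ⟨rfl, h'⟩ | ⟨rfl, h'⟩
  · have := cyc_ar1 n u s hu ht h
    omega
  · have := cyc_ar1 n u t hu hs h.symm
    omega
  · obtain rfl : t = n - 1 := by omega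
    have := cyc_ar2 n u hu h
    omega
  · obtain rfl : s = n - 1 := by omega
    have := cyc_ar2 n u hu h.symm
    omega

theorem deqCount_eq_zero {W : Type*} [Fintype W] (G : SimpleGraph W) (u v : W)
    (h : ∀ s t, G.Adj s t → G.dist u s = G.dist u t → G.dist v s = G.dist v t → False) :
    deqCount G u v = 0 := by
  unfold deqCount
  rw [Finset.card_eq_zero, Finset.filter_eq_empty_iff]
  intro e
  induction e using Sym2.ind with
  | _ s t =>
    intro he hd
    rw [SimpleGraph.mem_edgeFinset, SimpleGraph.mem_edgeSet] at he
    exact h s t he hd.1 hd.2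

/-- **Lemma (off-diagonal distance-equal count on a cycle).**
For distinct vertices `u ≠ v` of the cycle graph `C` on `n ≥ 3` vertices, no edge of `C` is
`(u,v)`-distance-equal, i.e. `deq_C(u,v) = 0`. -/
theorem deqCount_cycleGraph_of_ne (n : ℕ) (hn : 3 ≤ n) (u v : Fin n) (huv : u ≠ v) :
    deqCount (SimpleGraph.cycleGraph n) u v = 0 := by
  apply deqCount_eq_zero
  intro s t he h1 h2
  rw [cyc_adj_iff n hn] at he
  rw [cyc_dist n hn, cyc_dist n hn] at h1 h2
  have hne : u.val ≠ v.val := fun h => huv (Fin.ext h)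
  have hu := u.isLt
  have hv := v.isLt
  have hs := s.isLt
  have ht := t.isLt
  have e1 := cyc_edge n u s t hu hs ht he h1
  have e2 := cyc_edge n v s t hv hs ht he h2
  omega
end
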